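/- arXiv:2411.15107 — 3 statements merged into one kernel-verified Lean document; each statement's English description precedes it below -/
import Mathlib

section
/- If M is a discrete complete pointed metric space (every singleton is open), then the Lipschitz-free space F(M) has property (V*). -/
open Filter Topology Metric Set

noncomputable section

/-- A formal series `∑ yₙ` in a normed space `Y` is weakly unconditionally Cauchy (WUC)
if `∑ |⟨φ, yₙ⟩| < ∞` for every continuous linear functional `φ` on `Y`. -/
def IsWUC {Y : Type*} [SeminormedAddCommGroup Y] [NormedSpace ℝ Y] (y : ℕ → Y) : Prop :=
  ∀ φ : Y →L[ℝ] ℝ, Summable fun n => |φ (y n)|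

/-- `Γ` is a (V*)-set in `X`: for every WUC series `∑ fₙ` in the dual `X*`,
`sup_{x ∈ Γ} |⟨x, fₙ⟩| → 0`. -/
def IsVStarSet {X : Type*} [SeminormedAddCommGroup X] [NormedSpace ℝ X] (Γ : Set X) : Prop :=
  ∀ f : ℕ → (X →L[ℝ] ℝ), IsWUC f →
    ∀ ε > (0 : ℝ), ∀ᶠ n in atTop, ∀ x ∈ Γ, |f n x| ≤ ε

/-- `Γ` is relatively weakly compact: its closure in the weak topology is compact. -/
def RelWeaklyCompact {X : Type*} [SeminormedAddCommGroup X] [NormedSpace ℝ X]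
    (Γ : Set X) : Prop :=
  IsCompact (closure ((toWeakSpace ℝ X) '' Γ))

/-- A normed space has Pełczyński's property (V*) if every (V*)-set is relatively
weakly compact. -/
def HasPropertyVStar (X : Type*) [SeminormedAddCommGroup X] [NormedSpace ℝ X] : Prop :=
  ∀ Γ : Set X, IsVStarSet Γ → RelWeaklyCompact Γ

/-- `F`, together with the map `δ : M → F`, is (a realization of) the Lipschitz-free space
over the pointed metric space `(M, o)`: `δ` is a base-point-preserving isometric embedding
whose range has dense linear span, and every Lipschitz function `f : M → ℝ` vanishing at
the base point lifts to a continuous linear functional of norm at most `Lip(f)` (this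
characterizes `F(M)`, with dual `Lip₀(M)`, up to isometric isomorphism). -/
structure IsLipschitzFree {M : Type*} [MetricSpace M] (o : M)
    {F : Type*} [NormedAddCommGroup F] [NormedSpace ℝ F] (δ : M → F) : Prop where
  isometry : Isometry δ
  map_base : δ o = 0
  dense_span : Dense (Submodule.span ℝ (Set.range δ) : Set F)
  lift : ∀ (L : NNReal) (f : M → ℝ), LipschitzWith L f → f o = 0 →
    ∃ φ : F →L[ℝ] ℝ, ‖φ‖ ≤ L ∧ ∀ x, φ (δ x) = f x

/-- The subspace of `F` corresponding to the Lipschitz-free space `F(S)` over a subset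
`S ⊆ M`: the closed linear span of `δ(S)`. -/
def freeSpan {M : Type*} [MetricSpace M] {F : Type*} [NormedAddCommGroup F]
    [NormedSpace ℝ F] (δ : M → F) (S : Set M) : Submodule ℝ F :=
  (Submodule.span ℝ (δ '' S)).topologicalClosure

theorem mem_freeSpan {M : Type*} [MetricSpace M] {F : Type*} [NormedAddCommGroup F]
    [NormedSpace ℝ F] (δ : M → F) {S : Set M} {x : M} (hx : x ∈ S) :
    δ x ∈ freeSpan δ S :=
  (Submodule.span ℝ (δ '' S)).le_topologicalClosure
    (Submodule.subset_span ⟨x, hx, rfl⟩)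



section helpers

variable {M : Type*} [MetricSpace M] {o : M} {F : Type*} [NormedAddCommGroup F]
  [NormedSpace ℝ F] {δ : M → F}

theorem free_ext (hδ : IsLipschitzFree o δ) {φ ψ : F →L[ℝ] ℝ}
    (h : ∀ x, φ (δ x) = ψ (δ x)) : φ = ψ := by
  refine ContinuousLinearMap.ext_on hδ.dense_span ?_
  rintro _ ⟨x, rfl⟩
  exact h x

theorem free_lip (hδ : IsLipschitzFree o δ) {φ : F →L[ℝ] ℝ} {L : ℝ} (hφ : ‖φ‖ ≤ L) (x y : M) :
    |φ (δ x) - φ (δ y)| ≤ L * dist x y := by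
  rw [← map_sub, ← hδ.isometry.dist_eq, dist_eq_norm]
  exact (φ.le_opNorm _).trans (by gcongr)

theorem free_lift (hδ : IsLipschitzFree o δ) {L : ℝ} (hL : 0 ≤ L) (f : M → ℝ)
    (hf : ∀ x y, |f x - f y| ≤ L * dist x y) (h0 : f o = 0) :
    ∃ φ : F →L[ℝ] ℝ, ‖φ‖ ≤ L ∧ ∀ x, φ (δ x) = f x := by
  refine hδ.lift ⟨L, hL⟩ f ?_ h0
  refine LipschitzWith.of_dist_le_mul fun x y => ?_
  exact hf x y

theorem free_mul (hδ : IsLipschitzFree o δ) {L K R : ℝ} (hL : 0 ≤ L) (hK : 0 ≤ K) (hR : 0 ≤ R)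
    {φ : F →L[ℝ] ℝ} (hφ : ‖φ‖ ≤ L) (h : M → ℝ) (h0 : ∀ x, 0 ≤ h x) (h1 : ∀ x, h x ≤ 1)
    (hh : ∀ x y, |h x - h y| ≤ K * dist x y) (hs : ∀ x, h x ≠ 0 → |φ (δ x)| ≤ R) :
    ∃ ψ : F →L[ℝ] ℝ, ‖ψ‖ ≤ L + R * K ∧ ∀ x, ψ (δ x) = h x * φ (δ x) := by
  have key : ∀ x y, h x ≠ 0 →
      |h x * φ (δ x) - h y * φ (δ y)| ≤ (L + R * K) * dist x y := by
    intro x y hx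
    have e : h x * φ (δ x) - h y * φ (δ y)
        = φ (δ x) * (h x - h y) + h y * (φ (δ x) - φ (δ y)) := by ring
    rw [e]
    refine (abs_add_le _ _).trans ?_
    rw [abs_mul, abs_mul, abs_of_nonneg (h0 y)]
    have a1 : |φ (δ x)| * |h x - h y| ≤ R * (K * dist x y) :=
      mul_le_mul (hs x hx) (hh x y) (abs_nonneg _) hR
    have a2 : h y * |φ (δ x) - φ (δ y)| ≤ 1 * (L * dist x y) :=
      mul_le_mul (h1 y) (free_lip hδ hφ x y) (abs_nonneg _) zero_le_one
    nlinarith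
  refine free_lift hδ (by positivity) (fun x => h x * φ (δ x)) ?_ (by simp [hδ.map_base])
  intro x y
  by_cases hx : h x = 0
  · by_cases hy : h y = 0
    · simp only [hx, hy, zero_mul, sub_self, abs_zero]; positivity
    · rw [abs_sub_comm, dist_comm]; exact key y x hy
  · exact key x y hx

theorem free_wuc (hδ : IsLipschitzFree o δ) {L : ℝ} (hL : 0 ≤ L) (f : ℕ → F →L[ℝ] ℝ)
    (hf : ∀ n, ‖f n‖ ≤ L)
    (hd : ∀ x n m, f n (δ x) ≠ 0 → f m (δ x) ≠ 0 → n = m) : IsWUC f := by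
  intro Φ
  have bound : ∀ (s : Finset ℕ) (c : ℕ → ℝ), (∀ n, |c n| ≤ 1) →
      ‖∑ n ∈ s, c n • f n‖ ≤ 2 * L := by
    intro s c hc
    have hex := free_lift hδ (L := 2 * L) (by positivity)
      (fun x => (∑ n ∈ s, c n • f n) (δ x)) ?_ (by simp [hδ.map_base])
    · obtain ⟨ψ, hψ, hψ'⟩ := hex
      rw [← free_ext hδ hψ']; exact hψ
    intro x y
    classical
    have hcard : (s.filter (fun n => f n (δ x) ≠ 0 ∨ f n (δ y) ≠ 0)).card ≤ 2 := by
      rw [Finset.filter_or]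
      refine (Finset.card_union_le _ _).trans ?_
      have h1 : ∀ z, (s.filter (fun n => f n (δ z) ≠ 0)).card ≤ 1 := by
        intro z
        rw [Finset.card_le_one]
        intro a ha b hb
        simp only [Finset.mem_filter] at ha hb
        exact hd z a b ha.2 hb.2
      have := h1 x
      have := h1 y
      omega
    have e : (∑ n ∈ s, c n • f n) (δ x) - (∑ n ∈ s, c n • f n) (δ y)
        = ∑ n ∈ s.filter (fun n => f n (δ x) ≠ 0 ∨ f n (δ y) ≠ 0),
          c n * (f n (δ x) - f n (δ y)) := by
      simp only [ContinuousLinearMap.sum_apply, ContinuousLinearMap.smul_apply, smul_eq_mul]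
      rw [← Finset.sum_sub_distrib]
      symm
      rw [Finset.sum_filter_of_ne]
      · exact Finset.sum_congr rfl fun n _ => by ring
      · intro n _ hn
        by_contra hcon
        push Not at hcon
        apply hn
        rw [hcon.1, hcon.2]; ring
    rw [e]
    calc _ ≤ ∑ n ∈ s.filter (fun n => f n (δ x) ≠ 0 ∨ f n (δ y) ≠ 0),
          |c n * (f n (δ x) - f n (δ y))| := Finset.abs_sum_le_sum_abs _ _
      _ ≤ ∑ n ∈ s.filter (fun n => f n (δ x) ≠ 0 ∨ f n (δ y) ≠ 0), L * dist x y := by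
          refine Finset.sum_le_sum fun n _ => ?_
          rw [abs_mul]
          have := mul_le_mul (hc n) (free_lip hδ (hf n) x y) (abs_nonneg _) zero_le_one
          linarith
      _ ≤ 2 * L * dist x y := by
          rw [Finset.sum_const, nsmul_eq_mul]
          have h2 : ((s.filter (fun n => f n (δ x) ≠ 0 ∨ f n (δ y) ≠ 0)).card : ℝ) ≤ 2 := by
            exact_mod_cast hcard
          have : 0 ≤ L * dist x y := by positivity
          nlinarith
  refine summable_of_sum_le (c := ‖Φ‖ * (2 * L)) (fun n => abs_nonneg _) ?_
  intro s
  have e : ∑ n ∈ s, |Φ (f n)| = Φ (∑ n ∈ s, (SignType.sign (Φ (f n)) : ℝ) • f n) := by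
    rw [map_sum]
    refine Finset.sum_congr rfl fun n _ => ?_
    rw [map_smul, smul_eq_mul, sign_mul_self]
  rw [e]
  refine (le_abs_self _).trans ((Φ.le_opNorm _).trans ?_)
  gcongr
  refine bound s (fun n => (SignType.sign (Φ (f n)) : ℝ)) fun n => ?_
  rcases SignType.sign (Φ (f n)) with _ | _ | _ <;> simp

theorem free_approx (hδ : IsLipschitzFree o δ) (μ : F) {η : ℝ} (hη : 0 < η) :
    ∃ E : Finset M, ∀ φ : F →L[ℝ] ℝ, (∀ x ∈ E, φ (δ x) = 0) → |φ μ| ≤ ‖φ‖ * η := by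
  obtain ⟨v, hv, hd⟩ := hδ.dense_span.exists_dist_lt μ hη
  obtain ⟨c, rfl⟩ := Finsupp.mem_span_range_iff_exists_finsupp.1 hv
  refine ⟨c.support, fun φ hφ => ?_⟩
  have h0 : φ (c.sum fun i a => a • δ i) = 0 := by
    rw [Finsupp.sum, map_sum]
    refine Finset.sum_eq_zero fun x hx => ?_
    rw [map_smul, hφ x hx, smul_zero]
  have : φ μ = φ (μ - c.sum fun i a => a • δ i) := by rw [map_sub, h0, sub_zero]
  rw [this]
  refine (φ.le_opNorm _).trans ?_
  rw [dist_eq_norm] at hd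
  gcongr

theorem free_hump (hδ : IsLipschitzFree o δ) {Γ : Set F} (hΓ : IsVStarSet Γ) {L ε : ℝ}
    (hL : 0 ≤ L) (hε : 0 < ε) (P : (F →L[ℝ] ℝ) → Prop) (hP : ∀ φ, P φ → ‖φ‖ ≤ L)
    (𝒮 : Set (Set M)) (hne : 𝒮.Nonempty)
    (H : ∀ S ∈ 𝒮, ∀ E : Finset M, ∃ S' ∈ 𝒮, S ⊆ S' ∧ ∀ φ, P φ → ∃ ψ : F →L[ℝ] ℝ,
      ‖ψ‖ ≤ L ∧ (∀ x ∈ E, ψ (δ x) = φ (δ x)) ∧ (∀ x, φ (δ x) = 0 → ψ (δ x) = 0) ∧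
      ∀ x, x ∉ S' → ψ (δ x) = 0) :
    ∃ S ∈ 𝒮, ∀ φ, P φ → (∀ x ∈ S, φ (δ x) = 0) → ∀ μ ∈ Γ, |φ μ| ≤ ε := by
  by_contra hcon
  push Not at hcon
  have step : ∀ S : 𝒮, ∃ (S' : 𝒮) (ψ : F →L[ℝ] ℝ) (μ : F), (S : Set M) ⊆ S' ∧ ‖ψ‖ ≤ L ∧ μ ∈ Γ ∧
      ε / 2 < |ψ μ| ∧ (∀ x ∈ (S : Set M), ψ (δ x) = 0) ∧ ∀ x, x ∉ (S' : Set M) → ψ (δ x) = 0 := by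
    rintro ⟨S, hS⟩
    obtain ⟨φ, hφ, hφ0, μ, hμ, hlt⟩ := hcon S hS
    have hη : 0 < ε / (2 * (2 * L + 1)) := by positivity
    obtain ⟨E, hE⟩ := free_approx hδ μ hη
    obtain ⟨S', hS', hsub, hψ⟩ := H S hS E
    obtain ⟨ψ, h1, h2, h3, h4⟩ := hψ φ hφ
    refine ⟨⟨S', hS'⟩, ψ, μ, hsub, h1, hμ, ?_, fun x hx => h3 x (hφ0 x hx), h4⟩
    have h5 := hE (φ - ψ) (fun x hx => by simp [h2 x hx])
    have h6 : ‖φ - ψ‖ ≤ 2 * L := by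
      refine (norm_sub_le _ _).trans ?_
      linarith [hP φ hφ]
    have h7 : ‖φ - ψ‖ * (ε / (2 * (2 * L + 1))) ≤ ε / 2 := by
      calc _ ≤ (2 * L + 1) * (ε / (2 * (2 * L + 1))) := by gcongr; linarith
        _ = ε / 2 := by field_simp
    have h8 : |φ μ| ≤ |(φ - ψ) μ| + |ψ μ| := by
      have : φ μ = (φ - ψ) μ + ψ μ := by simp
      rw [this]; exact abs_add_le _ _
    linarith
  choose next ψ μ hsub hn hμ hlt hin hout using step
  obtain ⟨S0, hS0⟩ := hne
  let S : ℕ → 𝒮 := fun n => next^[n] ⟨S0, hS0⟩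
  have hS : ∀ n, S (n + 1) = next (S n) := fun n => Function.iterate_succ_apply' _ _ _
  have hmono : Monotone fun n => (S n : Set M) := by
    refine monotone_nat_of_le_succ fun n => ?_
    change (S n : Set M) ⊆ (S (n + 1) : Set M)
    rw [hS]; exact hsub _
  have hdis : ∀ x n m, n < m → ψ (S n) (δ x) ≠ 0 → ψ (S m) (δ x) ≠ 0 → False := by
    intro x n m hnm h1 h2
    apply h2
    apply hin
    have hx : x ∈ (S (n + 1) : Set M) := by
      by_contra hx
      rw [hS] at hx
      exact h1 (hout _ x hx)
    exact hmono (Nat.succ_le_of_lt hnm) hx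
  have hw : IsWUC fun n => ψ (S n) := by
    refine free_wuc hδ hL _ (fun n => hn _) ?_
    intro x n m h1 h2
    rcases lt_trichotomy n m with h | h | h
    · exact (hdis x n m h h1 h2).elim
    · exact h
    · exact (hdis x m n h h2 h1).elim
  obtain ⟨n, hn'⟩ := (hΓ _ hw (ε / 2) (by positivity)).exists
  exact absurd (hn' _ (hμ (S n))) (not_le.2 (hlt _))

/-- truncated ramp -/
def ramp (r t : ℝ) : ℝ := min 1 (max 0 (2 - t / r))

theorem ramp_nonneg (r t : ℝ) : 0 ≤ ramp r t := by simp [ramp]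
theorem ramp_le_one (r t : ℝ) : ramp r t ≤ 1 := by simp [ramp]
theorem ramp_eq_one {r t : ℝ} (hr : 0 < r) (h : t ≤ r) : ramp r t = 1 := by
  have : t / r ≤ 1 := (div_le_one hr).2 h
  rw [ramp, min_eq_left]
  exact le_max_of_le_right (by linarith)
theorem ramp_eq_zero {r t : ℝ} (hr : 0 < r) (h : 2 * r ≤ t) : ramp r t = 0 := by
  have : 2 ≤ t / r := (le_div_iff₀ hr).2 h
  rw [ramp, max_eq_left (by linarith)]
  simp
theorem ramp_lip {r : ℝ} (hr : 0 < r) (s t : ℝ) : |ramp r s - ramp r t| ≤ r⁻¹ * |s - t| := by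
  unfold ramp
  refine (abs_min_sub_min_le_max _ _ _ _).trans ?_
  rw [sub_self, abs_zero]
  refine max_le (by positivity) ?_
  refine (abs_max_sub_max_le_max _ _ _ _).trans ?_
  rw [sub_self, abs_zero]
  refine max_le (by positivity) ?_
  have : 2 - s / r - (2 - t / r) = r⁻¹ * (t - s) := by field_simp; ring
  rw [this, abs_mul, abs_of_pos (inv_pos.2 hr), abs_sub_comm]

/-- radial cut-off -/
theorem free_radial (hδ : IsLipschitzFree o δ) {L r : ℝ} (hL : 0 ≤ L) (hr : 0 < r)
    {φ : F →L[ℝ] ℝ} (hφ : ‖φ‖ ≤ L) :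
    ∃ ψ : F →L[ℝ] ℝ, ‖ψ‖ ≤ 3 * L ∧ ∀ x, ψ (δ x) = ramp r (dist x o) * φ (δ x) := by
  have hex := free_mul hδ hL (K := r⁻¹) (R := L * (2 * r)) (by positivity)
    (by positivity) hφ (fun x => ramp r (dist x o)) (fun x => ramp_nonneg _ _)
    (fun x => ramp_le_one _ _) ?_ ?_
  · obtain ⟨ψ, h1, h2⟩ := hex
    refine ⟨ψ, h1.trans (le_of_eq ?_), h2⟩
    field_simp; ring
  · intro x y
    refine (ramp_lip hr _ _).trans ?_
    gcongr
    exact abs_dist_sub_le x y o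
  · intro x hx
    have h3 : dist x o < 2 * r := by
      by_contra h
      exact hx (ramp_eq_zero hr (not_lt.1 h))
    have := free_lip hδ hφ x o
    rw [hδ.map_base, map_zero, sub_zero] at this
    refine this.trans ?_
    gcongr

/-- cut-off around a nonempty set -/
theorem free_cut (hδ : IsLipschitzFree o δ) {L r R : ℝ} (hL : 0 ≤ L) (hr : 0 < r) (hR : 0 ≤ R)
    {φ : F →L[ℝ] ℝ} (hφ : ‖φ‖ ≤ L) (hb : ∀ x, |φ (δ x)| ≤ R) (E : Set M) :
    ∃ ψ : F →L[ℝ] ℝ, ‖ψ‖ ≤ L + R * r⁻¹ ∧ ∀ x, ψ (δ x) = ramp r (infDist x E) * φ (δ x) := by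
  refine free_mul hδ hL (by positivity) hR hφ (fun x => ramp r (infDist x E))
    (fun x => ramp_nonneg _ _) (fun x => ramp_le_one _ _) ?_ (fun x _ => hb x)
  intro x y
  refine (ramp_lip hr _ _).trans ?_
  gcongr
  have := (lipschitz_infDist_pt E).dist_le_mul x y
  simpa [Real.dist_eq] using this

theorem free_ball (hδ : IsLipschitzFree o δ) {Γ : Set F} (hΓ : IsVStarSet Γ) {L ε : ℝ}
    (hL : 0 ≤ L) (hε : 0 < ε) : ∃ r : ℝ, 0 < r ∧ ∀ φ : F →L[ℝ] ℝ, ‖φ‖ ≤ L →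
      (∀ x, dist x o ≤ r → φ (δ x) = 0) → ∀ μ ∈ Γ, |φ μ| ≤ ε := by
  have hex := free_hump hδ hΓ (L := 3 * L) (by positivity) hε
    (fun φ => ‖φ‖ ≤ L) (fun φ h => by linarith)
    {S | ∃ r : ℝ, 0 < r ∧ S = closedBall o r} ⟨_, 1, one_pos, rfl⟩ ?_
  · obtain ⟨S, ⟨r, hr, rfl⟩, h⟩ := hex
    exact ⟨r, hr, fun φ h1 h2 => h φ h1 fun x hx => h2 x hx⟩
  rintro _ ⟨r, hr, rfl⟩ E
  obtain ⟨r', hr', hE⟩ : ∃ r', r ≤ r' ∧ ∀ x ∈ E, dist x o ≤ r' := by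
    obtain ⟨b, hb⟩ := (E.image fun x => dist x o).bddAbove
    refine ⟨max r b, le_max_left _ _, fun x hx => le_max_of_le_right (hb ?_)⟩
    simp only [Finset.coe_image]
    exact ⟨x, hx, rfl⟩
  have hr0 : 0 < r' := hr.trans_le hr'
  refine ⟨_, ⟨2 * r', by positivity, rfl⟩, closedBall_subset_closedBall (by linarith), ?_⟩
  intro φ hφ
  obtain ⟨ψ, h1, h2⟩ := free_radial hδ hL hr0 hφ
  refine ⟨ψ, h1, fun x hx => ?_, fun x hx => ?_, fun x hx => ?_⟩
  · rw [h2, ramp_eq_one hr0 (hE x hx), one_mul]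
  · rw [h2, hx, mul_zero]
  · rw [h2, ramp_eq_zero hr0, zero_mul]
    rw [mem_closedBall, not_le] at hx
    exact hx.le

theorem free_nbhd (hδ : IsLipschitzFree o δ) {Γ : Set F} (hΓ : IsVStarSet Γ) {L R r ε : ℝ}
    (hL : 0 ≤ L) (hR : 0 ≤ R) (hr : 0 < r) (hε : 0 < ε) :
    ∃ E : Finset M, E.Nonempty ∧ ∀ φ : F →L[ℝ] ℝ, ‖φ‖ ≤ L → (∀ x, |φ (δ x)| ≤ R) →
      (∀ x, infDist x (E : Set M) ≤ r → φ (δ x) = 0) → ∀ μ ∈ Γ, |φ μ| ≤ ε := by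
  classical
  have hex := free_hump hδ hΓ (L := L + R * (r / 2)⁻¹) (by positivity) hε
    (fun φ => ‖φ‖ ≤ L ∧ ∀ x, |φ (δ x)| ≤ R)
    (fun φ h => by have : 0 ≤ R * (r / 2)⁻¹ := by positivity
                   linarith [h.1])
    {S | ∃ E : Finset M, E.Nonempty ∧ S = {x | infDist x (E : Set M) ≤ r}}
    ⟨_, {o}, Finset.singleton_nonempty _, rfl⟩ ?_
  · obtain ⟨S, ⟨E, hE, rfl⟩, h⟩ := hex
    exact ⟨E, hE, fun φ h1 h2 h3 => h φ ⟨h1, h2⟩ fun x hx => h3 x hx⟩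
  rintro _ ⟨E₀, hE₀, rfl⟩ E
  refine ⟨_, ⟨E₀ ∪ E, hE₀.mono Finset.subset_union_left, rfl⟩, ?_, ?_⟩
  · intro x hx
    refine le_trans (infDist_le_infDist_of_subset ?_ ?_) hx
    · simp
    · simpa using hE₀
  · rintro φ ⟨hφ, hb⟩
    obtain ⟨ψ, h1, h2⟩ := free_cut hδ hL (half_pos hr) hR hφ hb ((E₀ ∪ E : Finset M) : Set M)
    refine ⟨ψ, h1, fun x hx => ?_, fun x hx => ?_, fun x hx => ?_⟩
    · rw [h2, ramp_eq_one (half_pos hr), one_mul]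
      rw [infDist_zero_of_mem (by simp [hx])]
      positivity
    · rw [h2, hx, mul_zero]
    · rw [h2, ramp_eq_zero (half_pos hr), zero_mul]
      simp only [mem_setOf_eq, not_le] at hx
      linarith

theorem exists_finite_inter [CompleteSpace M] (hdisc : ∀ x : M, IsOpen ({x} : Set M))
    (E : ℕ → Finset M) (hE : ∀ n, (E n).Nonempty) (r : ℕ → ℝ) 
    (hr : Tendsto r atTop (𝓝 0)) :
    ∃ n, {x : M | ∀ j < n, infDist x (E j : Set M) < r j}.Finite := by
  by_contra hcon
  push Not at hcon
  have hinf : ∀ (n : ℕ) (T : Finset M), ∃ x, (∀ j < n, infDist x (E j : Set M) < r j) ∧ x ∉ T := by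
    intro n T
    obtain ⟨x, hx, hx'⟩ := (hcon n).exists_notMem_finset T
    exact ⟨x, hx, hx'⟩
  classical
  choose g hg hgT using hinf
  let p : ℕ → Finset M × ℕ := fun n => (fun q => (insert (g q.2 q.1) q.1, q.2 + 1))^[n] (∅, 0)
  have hp : ∀ n, p (n + 1) = (insert (g (p n).2 (p n).1) (p n).1, (p n).2 + 1) := fun n =>
    Function.iterate_succ_apply' _ _ _
  have hp2 : ∀ n, (p n).2 = n := by
    intro n
    induction n with
    | zero => rfl
    | succ n ih => rw [hp]; simp [ih]
  let u : ℕ → M := fun n => g n (p n).1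
  have hp1 : ∀ n, (p (n + 1)).1 = insert (u n) (p n).1 := by
    intro n; rw [hp]; simp only [hp2, u]
  have hmono : Monotone fun n => (p n).1 := by
    refine monotone_nat_of_le_succ fun n => ?_
    rw [hp1]; exact Finset.subset_insert _ _
  have hne : ∀ n m, n < m → u n ≠ u m := by
    intro n m hnm h
    apply hgT m (p m).1
    change u m ∈ _
    rw [← h]
    apply hmono (Nat.succ_le_of_lt hnm)
    change u n ∈ (p (n + 1)).1
    rw [hp1]; exact Finset.mem_insert_self _ _
  have hu : ∀ n, ∀ j < n, infDist (u n) (E j : Set M) < r j := fun n => hg n _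
  have htb : TotallyBounded (range u) := by
    rw [Metric.totallyBounded_iff]
    intro ε hε
    obtain ⟨j, hj⟩ := (hr.eventually (gt_mem_nhds hε)).exists
    refine ⟨(E j : Set M) ∪ u '' (Set.Iic j), (E j).finite_toSet.union ((Set.finite_Iic j).image u), ?_⟩
    rintro _ ⟨n, rfl⟩
    by_cases hn : j < n
    · obtain ⟨e, he, hd⟩ := (infDist_lt_iff (by simpa using hE j)).1 ((hu n j hn).trans hj)
      exact mem_biUnion (Or.inl he) hd
    · exact mem_biUnion (Or.inr ⟨n, not_lt.1 hn, rfl⟩) (mem_ball_self hε)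
  have hc : IsCompact (closure (range u)) := htb.closure.isCompact_of_isClosed isClosed_closure
  obtain ⟨a, -, s, hs, hlim⟩ := hc.tendsto_subseq (x := u) fun n => subset_closure ⟨n, rfl⟩
  have hev := hlim.eventually ((hdisc a).mem_nhds rfl)
  obtain ⟨N, hN⟩ := eventually_atTop.1 hev
  have h1 : u (s N) = a := hN N le_rfl
  have h2 : u (s (N + 1)) = a := hN (N + 1) (Nat.le_succ _)
  exact hne _ _ (hs (Nat.lt_succ_self N)) (h1.trans h2.symm)

theorem free_tight [CompleteSpace M] (hdisc : ∀ x : M, IsOpen ({x} : Set M))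
    (hδ : IsLipschitzFree o δ) {Γ : Set F} (hΓ : IsVStarSet Γ) {ε : ℝ} (hε : 0 < ε) :
    ∃ K : Set M, K.Finite ∧ ∀ φ : F →L[ℝ] ℝ, ‖φ‖ ≤ 1 → (∀ x ∈ K, φ (δ x) = 0) →
      ∀ μ ∈ Γ, |φ μ| ≤ ε := by
  obtain ⟨ρ, hρ, hball⟩ := free_ball hδ hΓ (L := 4) (by norm_num) (half_pos hε)
  let R : ℝ := 2 * ρ
  have hR : 0 ≤ R := by positivity
  let r : ℕ → ℝ := fun n => (1 / 2) ^ n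
  have hr : ∀ n, 0 < r n := fun n => by positivity
  let L : ℕ → ℝ := fun n => 3 + ∑ j ∈ Finset.range n, R * (r j)⁻¹
  have hLs : ∀ n, L (n + 1) = L n + R * (r n)⁻¹ := fun n => by
    simp only [L, Finset.sum_range_succ]; ring
  have hL : ∀ n, 0 ≤ L n := fun n => by
    have : 0 ≤ ∑ j ∈ Finset.range n, R * (r j)⁻¹ := Finset.sum_nonneg fun j _ => by
      have := hr j; positivity
    simp only [L]; linarith
  let e : ℕ → ℝ := fun n => ε / 4 * (1 / 2) ^ n
  have he : ∀ n, 0 < e n := fun n => by positivity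
  have hes : ∀ n, ∑ j ∈ Finset.range n, e j ≤ ε / 2 := by
    intro n
    have : ∑ j ∈ Finset.range n, e j = ε / 2 - ε / 2 * (1 / 2) ^ n := by
      induction n with
      | zero => simp
      | succ n ih => rw [Finset.sum_range_succ, ih]; simp only [e, pow_succ]; ring
    rw [this]
    have : 0 ≤ ε / 2 * (1 / 2) ^ n := by positivity
    linarith
  have hEx : ∀ n, ∃ E : Finset M, E.Nonempty ∧ ∀ φ : F →L[ℝ] ℝ, ‖φ‖ ≤ L n + L (n + 1) →
      (∀ x, |φ (δ x)| ≤ R) →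
      (∀ x, infDist x (E : Set M) ≤ r n → φ (δ x) = 0) → ∀ μ ∈ Γ, |φ μ| ≤ e n := fun n =>
    free_nbhd hδ hΓ (add_nonneg (hL n) (hL _)) hR (hr n) (he n)
  choose E hE hEφ using hEx
  obtain ⟨N, hN⟩ := exists_finite_inter hdisc E hE (fun n => 2 * r n) (by
    have := (tendsto_pow_atTop_nhds_zero_of_lt_one (r := (1 / 2 : ℝ)) (by norm_num)
      (by norm_num)).const_mul 2
    simpa [r] using this)
  refine ⟨_, hN, ?_⟩
  intro φ hφ hφK
  obtain ⟨ψ, hψ, hψx⟩ := free_radial hδ zero_le_one hρ hφ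
  have hψR : ∀ x, |ψ (δ x)| ≤ R := by
    intro x
    rw [hψx, abs_mul, abs_of_nonneg (ramp_nonneg _ _)]
    by_cases hx : 2 * ρ ≤ dist x o
    · rw [ramp_eq_zero hρ hx, zero_mul]; exact hR
    · have h1 := free_lip hδ hφ x o
      rw [hδ.map_base, map_zero, sub_zero, one_mul] at h1
      calc _ ≤ 1 * |φ (δ x)| := by gcongr; exact ramp_le_one _ _
        _ ≤ R := by rw [one_mul]; exact h1.trans (not_le.1 hx).le
  have h0 : ∀ μ ∈ Γ, |(φ - ψ) μ| ≤ ε / 2 := by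
    refine hball (φ - ψ) ?_ ?_
    · refine (norm_sub_le _ _).trans ?_; linarith
    · intro x hx
      simp [hψx, ramp_eq_one hρ hx]
  have ind : ∀ n, ∃ χ : F →L[ℝ] ℝ, ‖χ‖ ≤ L n ∧ (∀ x, |χ (δ x)| ≤ R) ∧
      (∀ x, φ (δ x) = 0 → χ (δ x) = 0) ∧
      (∀ x, ∀ j < n, 2 * r j ≤ infDist x (E j : Set M) → χ (δ x) = 0) ∧
      ∀ μ ∈ Γ, |(ψ - χ) μ| ≤ ∑ j ∈ Finset.range n, e j := by
    intro n
    induction n with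
    | zero =>
      refine ⟨ψ, by simpa [L] using hψ, hψR, fun x hx => by rw [hψx, hx, mul_zero], ?_, ?_⟩
      · intro x j hj; omega
      · simp
    | succ n ih =>
      obtain ⟨χ, c1, c2, c3, c4, c5⟩ := ih
      obtain ⟨χ', d1, d2⟩ := free_cut hδ (hL n) (hr n) hR c1 c2 (E n : Set M)
      rw [← hLs] at d1
      refine ⟨χ', d1, ?_, ?_, ?_, ?_⟩
      · intro x
        rw [d2, abs_mul, abs_of_nonneg (ramp_nonneg _ _)]
        calc _ ≤ 1 * |χ (δ x)| := by gcongr; exact ramp_le_one _ _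
          _ ≤ R := by rw [one_mul]; exact c2 x
      · intro x hx; rw [d2, c3 x hx, mul_zero]
      · intro x j hj hx
        rcases Nat.lt_succ_iff_lt_or_eq.1 hj with hj | rfl
        · rw [d2, c4 x j hj hx, mul_zero]
        · rw [d2, ramp_eq_zero (hr j) hx, zero_mul]
      · intro μ hμ
        have h1 : |(χ - χ') μ| ≤ e n := by
          refine hEφ n (χ - χ') ((norm_sub_le _ _).trans (add_le_add c1 d1)) ?_ ?_ μ hμ
          · intro x
            have : (χ - χ') (δ x) = (1 - ramp (r n) (infDist x (E n : Set M))) * χ (δ x) := by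
              rw [ContinuousLinearMap.sub_apply, d2]; ring
            rw [this, abs_mul, abs_of_nonneg (by linarith [ramp_le_one (r n) (infDist x (E n : Set M))])]
            calc _ ≤ 1 * |χ (δ x)| := by
                  gcongr; linarith [ramp_nonneg (r n) (infDist x (E n : Set M))]
              _ ≤ R := by rw [one_mul]; exact c2 x
          · intro x hx
            simp [d2, ramp_eq_one (hr n) hx]
        have h2 := c5 μ hμ
        have h3 : (ψ - χ') μ = (ψ - χ) μ + (χ - χ') μ := by simp
        rw [h3, Finset.sum_range_succ]
        exact (abs_add_le _ _).trans (add_le_add h2 h1)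
  obtain ⟨χ, c1, c2, c3, c4, c5⟩ := ind N
  have hχ : χ = 0 := by
    refine free_ext hδ fun x => ?_
    rw [ContinuousLinearMap.zero_apply]
    by_cases hx : ∀ j < N, infDist x (E j : Set M) < 2 * r j
    · exact c3 x (hφK x hx)
    · push Not at hx
      obtain ⟨j, hj, hx⟩ := hx
      exact c4 x j hj hx
  intro μ hμ
  have h1 := h0 μ hμ
  have h2 := (c5 μ hμ).trans (hes N)
  rw [hχ, sub_zero] at h2
  have h3 : φ μ = (φ - ψ) μ + ψ μ := by simp
  rw [h3]
  exact (abs_add_le _ _).trans (by linarith)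

theorem vstar_bounded {Γ : Set F} (hΓ : IsVStarSet Γ) : ∃ B, ∀ μ ∈ Γ, ‖μ‖ ≤ B := by
  by_contra hcon
  push Not at hcon
  choose μ hμ hlt using fun n : ℕ => hcon (2 ^ n)
  choose g hg hgμ using fun n => exists_dual_vector'' ℝ (μ n)
  have hw : IsWUC fun n => ((1 / 2 : ℝ) ^ n) • g n := by
    intro Φ
    refine Summable.of_nonneg_of_le (fun n => abs_nonneg _) (fun n => ?_)
      ((summable_geometric_of_lt_one (r := (1 / 2 : ℝ)) (by norm_num) (by norm_num)).mul_left ‖Φ‖)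
    rw [map_smul, smul_eq_mul, abs_mul, abs_of_pos (by positivity), mul_comm]
    gcongr
    calc |Φ (g n)| ≤ ‖Φ‖ * ‖g n‖ := Φ.le_opNorm _
      _ ≤ ‖Φ‖ * 1 := by gcongr; exact hg n
      _ = ‖Φ‖ := mul_one _
  obtain ⟨n, hn⟩ := (hΓ _ hw (1 / 2) (by norm_num)).exists
  have h1 := hn _ (hμ n)
  have h2 : (g n) (μ n) = ‖μ n‖ := hgμ n
  rw [ContinuousLinearMap.smul_apply, h2, smul_eq_mul, abs_of_nonneg (by positivity)] at h1
  have h3 : (1 / 2 : ℝ) ^ n * 2 ^ n ≤ (1 / 2) ^ n * ‖μ n‖ := by gcongr; exact (hlt n).le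
  rw [← mul_pow] at h3
  norm_num at h3 h1
  linarith

theorem exists_near (V : Submodule ℝ F) [FiniteDimensional ℝ V] {μ : F} {ε : ℝ}
    (h : ∀ φ : F →L[ℝ] ℝ, ‖φ‖ ≤ 1 → (∀ v ∈ V, φ v = 0) → |φ μ| < ε) :
    ∃ v ∈ V, ‖μ - v‖ < ε := by
  have hV : IsClosed (V : Set F) := V.closed_of_finiteDimensional
  haveI : IsClosed (V : Set F) := hV
  obtain ⟨g, hg, hgμ⟩ := exists_dual_vector'' ℝ (V.mkQ μ)
  have h1 := h (g.comp V.mkQL) ?_ ?_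
  · change |g (V.mkQ μ)| < ε at h1
    rw [hgμ] at h1
    have h2 : ‖V.mkQ μ‖ < ε := (le_abs_self _).trans_lt h1
    obtain ⟨m, hm, hlt⟩ := Submodule.Quotient.norm_mk_lt (V.mkQ μ) (sub_pos.2 h2)
    rw [add_sub_cancel] at hlt
    refine ⟨μ - m, ?_, by simpa using hlt⟩
    exact (Submodule.Quotient.eq V).1 hm.symm
  · refine ContinuousLinearMap.opNorm_le_bound _ zero_le_one fun x => ?_
    calc ‖g (V.mkQ x)‖ ≤ ‖g‖ * ‖V.mkQ x‖ := g.le_opNorm _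
      _ ≤ 1 * ‖x‖ := by
        gcongr
        exact Submodule.Quotient.norm_mk_le V x
  · intro v hv
    change g (V.mkQ v) = 0
    rw [Submodule.mkQ_apply, (Submodule.Quotient.mk_eq_zero V).2 hv, map_zero]

theorem totallyBounded_of_near {Γ : Set F} {B : ℝ} (hB : ∀ μ ∈ Γ, ‖μ‖ ≤ B)
    (h : ∀ ε > 0, ∃ V : Submodule ℝ F, FiniteDimensional ℝ V ∧ ∀ μ ∈ Γ, ∃ v ∈ V, ‖μ - v‖ < ε) :
    TotallyBounded Γ := by
  rw [Metric.totallyBounded_iff]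
  intro ε hε
  obtain ⟨V, hV, hΓ⟩ := h (ε / 2) (half_pos hε)
  haveI : ProperSpace V := FiniteDimensional.proper ℝ V
  have hc : IsCompact ((fun v : V => (v : F)) '' closedBall 0 (B + ε / 2)) :=
    (isCompact_closedBall _ _).image continuous_subtype_val
  obtain ⟨t, ht, hcov⟩ := Metric.totallyBounded_iff.1 hc.totallyBounded (ε / 2) (half_pos hε)
  refine ⟨t, ht, fun μ hμ => ?_⟩
  obtain ⟨v, hv, hlt⟩ := hΓ μ hμ
  have hvn : ‖v‖ ≤ B + ε / 2 := by
    have : v = μ - (μ - v) := by abel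
    rw [this]
    exact (norm_sub_le _ _).trans (add_le_add (hB μ hμ) hlt.le)
  have := hcov ⟨⟨v, hv⟩, by simpa using hvn, rfl⟩
  simp only [mem_iUnion, mem_ball, exists_prop] at this ⊢
  obtain ⟨y, hy, hd⟩ := this
  refine ⟨y, hy, ?_⟩
  rw [← dist_eq_norm] at hlt
  linarith [dist_triangle μ v y]

end helpers

/-- If `M` is a discrete complete pointed metric space (every singleton is open), then
the Lipschitz-free space `F(M)` has property (V*). -/
theorem propertyVStar_of_discrete
    {M : Type*} [MetricSpace M] [CompleteSpace M]
    (hdisc : ∀ x : M, IsOpen ({x} : Set M)) (o : M)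
    {F : Type*} [NormedAddCommGroup F] [NormedSpace ℝ F] [CompleteSpace F]
    (δ : M → F) (hδ : IsLipschitzFree o δ) :
    HasPropertyVStar F := by
  intro Γ hΓ
  obtain ⟨B, hB⟩ := vstar_bounded hΓ
  have htb : TotallyBounded Γ := by
    refine totallyBounded_of_near hB fun ε hε => ?_
    obtain ⟨K, hK, h⟩ := free_tight hdisc hδ hΓ (half_pos hε)
    haveI hfd : FiniteDimensional ℝ (Submodule.span ℝ (δ '' K)) :=
      FiniteDimensional.span_of_finite ℝ (hK.image δ)
    refine ⟨Submodule.span ℝ (δ '' K), hfd, fun μ hμ => exists_near _ fun φ h1 h2 => ?_⟩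
    refine (h φ h1 (fun x hx => h2 _ (Submodule.subset_span ⟨x, hx, rfl⟩)) μ hμ).trans_lt ?_
    linarith
  have hc : IsCompact (closure Γ) := htb.closure.isCompact_of_isClosed isClosed_closure
  have hcont : Continuous (toWeakSpace ℝ F) := (toWeakSpaceCLM ℝ F).continuous
  exact (hc.image hcont).closure_of_subset (Set.image_mono subset_closure)
end
end

section
/- Let M be a complete pointed metric space satisfying: for every compact set K ⊂ M and every subset Γ ⊂ F(K), if Γ is a (V*)-set with respect to F(cl(U)) for every open set U ⊃ K, then Γ is a (V*)-set with respect to F(L) for some compact L ⊃ K. Then property (V*) is compactly determined for F(M): if F(K∪{0}) has property (V*) for every compact K ⊂ M, then F(M) has property (V*). -/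
open Filter Topology Metric Set

noncomputable section

/-- `Γ ⊆ F` is a (V*)-set with respect to the (closed) subspace `S` of `F`: `Γ` is
contained in `S` and the corresponding subset of `S` is a (V*)-set in `S`. -/
def IsVStarSetWithin {F : Type*} [NormedAddCommGroup F] [NormedSpace ℝ F]
    (Γ : Set F) (S : Submodule ℝ F) : Prop :=
  Γ ⊆ (S : Set F) ∧ IsVStarSet {y : ↥S | (y : F) ∈ Γ}


/-! ### Functional-analytic preliminaries -/

theorem IsVStarSet.image_clm {X Y : Type*} [SeminormedAddCommGroup X] [NormedSpace ℝ X]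
    [SeminormedAddCommGroup Y] [NormedSpace ℝ Y] {Γ : Set X} (h : IsVStarSet Γ)
    (T : X →L[ℝ] Y) : IsVStarSet (T '' Γ) := by
  intro f hf ε hε
  have hw : IsWUC (fun n => (f n).comp T) := by
    intro φ
    have := hf (φ.comp ((ContinuousLinearMap.compL ℝ X Y ℝ).flip T))
    simpa using this
  filter_upwards [h _ hw ε hε] with n hn
  rintro _ ⟨x, hx, rfl⟩
  exact hn x hx

/-- A set that is uniformly approximated by (V*)-sets is a (V*)-set. -/
theorem IsVStarSet.of_approx {X : Type*} [NormedAddCommGroup X] [NormedSpace ℝ X]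
    [CompleteSpace X] {Γ : Set X}
    (h : ∀ ε > (0 : ℝ), ∃ Γ' : Set X, IsVStarSet Γ' ∧ ∀ x ∈ Γ, ∃ y ∈ Γ', ‖x - y‖ ≤ ε) :
    IsVStarSet Γ := by
  intro f hf ε hε
  obtain ⟨C, hC⟩ : ∃ C, ∀ n, ‖f n‖ ≤ C := by
    refine banach_steinhaus fun x => ?_
    have hs := hf (ContinuousLinearMap.apply ℝ ℝ x)
    refine ⟨∑' n, |f n x|, fun n => ?_⟩
    exact hs.le_tsum n (fun _ _ => abs_nonneg _)
  have hC0 : 0 ≤ C := (norm_nonneg _).trans (hC 0)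
  obtain ⟨Γ', hΓ', happ⟩ := h (ε / 2 / (C + 1)) (by positivity)
  filter_upwards [hΓ' f hf (ε / 2) (by positivity)] with n hn x hx
  obtain ⟨y, hy, hxy⟩ := happ x hx
  have h1 := hn y hy
  have h2 : |f n (x - y)| ≤ ε / 2 := by
    calc |f n (x - y)| ≤ ‖f n‖ * ‖x - y‖ := (f n).le_opNorm _
      _ ≤ (C + 1) * (ε / 2 / (C + 1)) := by
        gcongr
        linarith [hC n]
      _ = ε / 2 := by field_simp
  have h3 : f n x = f n (x - y) + f n y := by simp
  rw [h3]
  exact (abs_add_le _ _).trans (by linarith)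

open scoped Pointwise in
/-- Grothendieck's lemma: a set which is, for every `ε > 0`, within `ε` of a weakly compact
set is relatively weakly compact. -/
theorem relWeaklyCompact_of_approx {X : Type*} [NormedAddCommGroup X] [NormedSpace ℝ X]
    [CompleteSpace X] {Γ : Set X}
    (h : ∀ ε > (0 : ℝ), ∃ C : Set (WeakSpace ℝ X), IsCompact C ∧
      ∀ x ∈ Γ, ∃ y : X, toWeakSpace ℝ X y ∈ C ∧ ‖x - y‖ ≤ ε) :
    RelWeaklyCompact Γ := by
  set J := NormedSpace.inclusionInDoubleDualWeak ℝ X with hJ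
  have key : ∀ ε > (0 : ℝ), ∃ C : Set (WeakSpace ℝ X),
      IsCompact (J '' C + WeakDual.toStrongDual ⁻¹' closedBall (0 : StrongDual ℝ (StrongDual ℝ X)) ε) ∧
      closure (J '' ((toWeakSpace ℝ X) '' Γ)) ⊆
        J '' C + WeakDual.toStrongDual ⁻¹' closedBall (0 : StrongDual ℝ (StrongDual ℝ X)) ε := by
    intro ε hε
    obtain ⟨C, hC, hap⟩ := h ε hε
    have hc : IsCompact (J '' C + WeakDual.toStrongDual ⁻¹'
        closedBall (0 : StrongDual ℝ (StrongDual ℝ X)) ε) :=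
      (hC.image J.continuous).add (WeakDual.isCompact_closedBall _ _)
    refine ⟨C, hc, closure_minimal ?_ hc.isClosed⟩
    rintro _ ⟨_, ⟨x, hx, rfl⟩, rfl⟩
    obtain ⟨y, hy, hxy⟩ := hap x hx
    refine ⟨J (toWeakSpace ℝ X y), ⟨_, hy, rfl⟩, J (toWeakSpace ℝ X (x - y)), ?_, ?_⟩
    · refine mem_preimage.2 ((mem_closedBall_zero_iff (E := StrongDual ℝ (StrongDual ℝ X))).2 ?_)
      exact (NormedSpace.double_dual_bound ℝ X (x - y)).trans hxy
    · simp
  have hcomp : IsCompact (closure (J '' ((toWeakSpace ℝ X) '' Γ))) := by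
    obtain ⟨C, hc, hsub⟩ := key 1 one_pos
    exact hc.of_isClosed_subset isClosed_closure hsub
  have hrange : closure (J '' ((toWeakSpace ℝ X) '' Γ)) ⊆ Set.range J := by
    intro z hz
    have hcl : IsClosed (Set.range (NormedSpace.inclusionInDoubleDualLi (E := X) ℝ)) :=
      (NormedSpace.inclusionInDoubleDualLi (E := X)
        ℝ).isometry.isUniformInducing.isComplete_range.isClosed
    have hz' : WeakDual.toStrongDual z ∈
        closure (Set.range (NormedSpace.inclusionInDoubleDualLi (E := X) ℝ)) := by
      refine (Metric.mem_closure_iff (α := StrongDual ℝ (StrongDual ℝ X))).2 ?_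
      intro ε hε
      obtain ⟨C, _, hsub⟩ := key (ε / 2) (by positivity)
      obtain ⟨_, ⟨y, hy, rfl⟩, b, hb, hab⟩ := hsub hz
      refine ⟨_, ⟨(toWeakSpace ℝ X).symm y, rfl⟩, ?_⟩
      replace hb := (mem_closedBall_zero_iff (E := StrongDual ℝ (StrongDual ℝ X))).1 (mem_preimage.1 hb)
      refine lt_of_eq_of_lt (dist_eq_norm (E := StrongDual ℝ (StrongDual ℝ X)) _ _) ?_
      have : WeakDual.toStrongDual z -
          NormedSpace.inclusionInDoubleDualLi (E := X) ℝ ((toWeakSpace ℝ X).symm y)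
          = WeakDual.toStrongDual b := by
        rw [← hab]
        exact add_sub_cancel_left (G := StrongDual ℝ (StrongDual ℝ X)) _ _
      rw [this]
      linarith
    rw [hcl.closure_eq] at hz'
    obtain ⟨y, hy⟩ := hz'
    exact ⟨toWeakSpace ℝ X y, hy⟩
  unfold RelWeaklyCompact
  rw [(NormedSpace.isEmbedding_inclusionInDoubleDualWeak ℝ X).closure_eq_preimage_closure_image]
  exact (NormedSpace.isEmbedding_inclusionInDoubleDualWeak ℝ X).isCompact_preimage' hcomp hrange

/-- Membership in a closed subspace is detected by functionals. -/
theorem mem_topologicalClosure_of_dual {X : Type*} [NormedAddCommGroup X] [NormedSpace ℝ X]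
    (S : Submodule ℝ X) (x : X)
    (h : ∀ f : X →L[ℝ] ℝ, (∀ y ∈ S, f y = 0) → f x = 0) : x ∈ S.topologicalClosure := by
  by_contra hx
  obtain ⟨f, u, hu, hlt⟩ := geometric_hahn_banach_closed_point
    (S.topologicalClosure.convex) S.isClosed_topologicalClosure hx
  have hz : ∀ y ∈ S, f y = 0 := by
    intro y hy
    by_contra hne
    have h1 := hu (((u + 1) / f y) • y)
      (S.le_topologicalClosure (S.smul_mem _ hy))
    rw [map_smul, smul_eq_mul, div_mul_cancel₀ _ hne] at h1
    linarith
  have h0 := hu 0 (Submodule.zero_mem _)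
  rw [h f hz] at hlt
  simp at h0
  linarith

/-! ### Consequences of the universal property -/

section Free

variable {M : Type*} [MetricSpace M] {o : M}
  {F : Type*} [NormedAddCommGroup F] [NormedSpace ℝ F] {δ : M → F}

theorem IsLipschitzFree.ext_clm (hδ : IsLipschitzFree o δ) {X : Type*} [NormedAddCommGroup X]
    [NormedSpace ℝ X] {f g : F →L[ℝ] X} (h : ∀ x, f (δ x) = g (δ x)) : f = g := by
  refine ContinuousLinearMap.ext_on hδ.dense_span ?_
  rintro _ ⟨x, rfl⟩
  exact h x

theorem IsLipschitzFree.norm_le (hδ : IsLipschitzFree o δ) {C : NNReal} {G : F →L[ℝ] ℝ}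
    (h : LipschitzWith C fun x => G (δ x)) : ‖G‖ ≤ C := by
  obtain ⟨φ, hφ, hφ'⟩ := hδ.lift C _ h (by simp [hδ.map_base])
  rwa [hδ.ext_clm (f := G) (g := φ) fun x => (hφ' x).symm]

theorem IsLipschitzFree.exists_lift (hδ : IsLipschitzFree o δ) {X : Type*}
    [NormedAddCommGroup X] [NormedSpace ℝ X] [CompleteSpace X] {C : NNReal} {w : M → X}
    (hw : LipschitzWith C w) (hw0 : w o = 0) :
    ∃ T : F →L[ℝ] X, ‖T‖ ≤ C ∧ ∀ x, T (δ x) = w x := by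
  let e : (M →₀ ℝ) →ₗ[ℝ] F := Finsupp.linearCombination ℝ δ
  let f : (M →₀ ℝ) →ₗ[ℝ] X := Finsupp.linearCombination ℝ w
  have hd : DenseRange e := by
    have : (Set.range e) = (Submodule.span ℝ (Set.range δ) : Set F) := by
      rw [← Finsupp.range_linearCombination]; rfl
    rw [DenseRange, this]
    exact hδ.dense_span
  have hn : ∀ a, ‖f a‖ ≤ C * ‖e a‖ := by
    intro a
    refine NormedSpace.norm_le_dual_bound ℝ _ (by positivity) fun φ => ?_
    obtain ⟨G, hG, hG'⟩ := hδ.lift (‖φ‖₊ * C) (fun x => φ (w x)) (φ.lipschitz.comp hw)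
      (by simp [hw0])
    have : φ (f a) = G (e a) := by
      simp [f, e, Finsupp.linearCombination_apply, Finsupp.sum, hG']
    rw [this]
    refine (G.le_opNorm _).trans ?_
    calc ‖G‖ * ‖e a‖ ≤ (‖φ‖ * C) * ‖e a‖ := by
          gcongr; simpa using hG
      _ = C * ‖e a‖ * ‖φ‖ := by ring
  refine ⟨f.extendOfNorm e, LinearMap.opNorm_extendOfNorm_le hd C.2 hn, fun x => ?_⟩
  have := LinearMap.extendOfNorm_eq hd ⟨C, hn⟩ (Finsupp.single x 1)
  simpa [e, f] using this

/-- Sums of disjointly supported, uniformly Lipschitz functions give WUC series. -/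
theorem IsLipschitzFree.isWUC (hδ : IsLipschitzFree o δ) {C : NNReal} {G : ℕ → (F →L[ℝ] ℝ)}
    (hG : ∀ n, LipschitzWith C fun x => G n (δ x))
    (hdis : ∀ x m n, G m (δ x) ≠ 0 → G n (δ x) ≠ 0 → m = n) : IsWUC G := by
  intro φ
  have hb : ∀ (s : ℕ → ℝ) (N : ℕ), (∀ n, |s n| ≤ 1) →
      ‖∑ n ∈ Finset.range N, s n • G n‖ ≤ (2 * C : NNReal) := by
    intro s N hs
    refine hδ.norm_le (LipschitzWith.of_dist_le_mul fun x y => ?_)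
    simp only [FunLike.coe_sum, Finset.sum_apply, FunLike.coe_smul,
      Pi.smul_apply, smul_eq_mul, Real.dist_eq, ← Finset.sum_sub_distrib]
    refine (Finset.abs_sum_le_sum_abs _ _).trans ?_
    classical
    set A := (Finset.range N).filter fun n => G n (δ x) ≠ 0
    set B := (Finset.range N).filter fun n => G n (δ y) ≠ 0
    have hA : A.card ≤ 1 := Finset.card_le_one.2 fun m hm n hn =>
      hdis x m n (Finset.mem_filter.1 hm).2 (Finset.mem_filter.1 hn).2
    have hB : B.card ≤ 1 := Finset.card_le_one.2 fun m hm n hn =>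
      hdis y m n (Finset.mem_filter.1 hm).2 (Finset.mem_filter.1 hn).2
    have hAB : (A ∪ B).card ≤ 2 := (Finset.card_union_le _ _).trans (by omega)
    have hsub : A ∪ B ⊆ Finset.range N :=
      Finset.union_subset (Finset.filter_subset _ _) (Finset.filter_subset _ _)
    rw [← Finset.sum_subset hsub]
    · calc ∑ n ∈ A ∪ B, |s n * G n (δ x) - s n * G n (δ y)|
          ≤ ∑ n ∈ A ∪ B, (C : ℝ) * dist x y := by
            refine Finset.sum_le_sum fun n _ => ?_
            rw [← mul_sub, abs_mul]
            have h1 := (hG n).dist_le_mul x y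
            rw [Real.dist_eq] at h1
            calc |s n| * |G n (δ x) - G n (δ y)| ≤ 1 * |G n (δ x) - G n (δ y)| := by
                  gcongr; exact hs n
              _ ≤ _ := by rwa [one_mul]
        _ = (A ∪ B).card * ((C : ℝ) * dist x y) := by simp
        _ ≤ 2 * ((C : ℝ) * dist x y) := by
            gcongr; exact_mod_cast hAB
        _ = _ := by push_cast; ring
    · intro n hn hn'
      simp only [A, B, Finset.mem_union, Finset.mem_filter, hn, true_and, not_or, not_not] at hn'
      simp [hn'.1, hn'.2]
  refine summable_of_sum_range_le (c := ‖φ‖ * (2 * C : NNReal)) (fun _ => abs_nonneg _) fun N => ?_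
  have h1 := hb (fun n => SignType.sign (φ (G n))) N (fun n => by
    rcases lt_trichotomy (φ (G n)) 0 with h | h | h <;> simp [h])
  have h2 : ∑ n ∈ Finset.range N, |φ (G n)| =
      φ (∑ n ∈ Finset.range N, (SignType.sign (φ (G n)) : ℝ) • G n) := by
    rw [map_sum]
    refine Finset.sum_congr rfl fun n _ => ?_
    rw [map_smul, smul_eq_mul, sign_mul_self]
  rw [h2]
  refine (le_abs_self _).trans ((φ.le_opNorm _).trans ?_)
  gcongr

end Free

/-! ### Relative neighbourhoods and cut-off functions -/

section Cut

variable {M : Type*} [MetricSpace M]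

/-- Points whose distance to `E` is at most `r * (1 + dist x o)`. -/
def relNbhd (o : M) (E : Set M) (r : ℝ) : Set M :=
  {x | infDist x E ≤ r * (1 + dist x o)}

/-- A cut-off function, equal to `1` on `relNbhd o E ((c - 1) * r)` and
to `0` off `relNbhd o E (c * r)`. -/
def relCut (o : M) (E : Set M) (r c : ℝ) (x : M) : ℝ :=
  max 0 (min 1 (c - infDist x E / (r * (1 + dist x o))))

theorem relNbhd_mono {o : M} {E E' : Set M} (hE : o ∈ E) (h : E ⊆ E') (r : ℝ) :
    relNbhd o E r ⊆ relNbhd o E' r := fun _ hx =>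
  (infDist_le_infDist_of_subset h ⟨o, hE⟩).trans hx

theorem isClosed_relNbhd (o : M) (E : Set M) (r : ℝ) : IsClosed (relNbhd o E r) :=
  isClosed_le (continuous_infDist_pt E) (by fun_prop)

theorem relCut_nonneg (o : M) (E : Set M) (r c : ℝ) (x : M) : 0 ≤ relCut o E r c x :=
  le_max_left _ _

theorem relCut_le_one (o : M) (E : Set M) (r c : ℝ) (x : M) : relCut o E r c x ≤ 1 :=
  max_le zero_le_one (min_le_left _ _)

theorem relCut_eq_zero {o : M} {E : Set M} {r c : ℝ} (hr : 0 < r) {x : M}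
    (hx : x ∉ relNbhd o E (c * r)) : relCut o E r c x = 0 := by
  have hp : 0 < 1 + dist x o := by positivity
  simp only [relNbhd, mem_ofPred_eq, not_le] at hx
  have : c ≤ infDist x E / (r * (1 + dist x o)) := by
    rw [le_div_iff₀ (by positivity)]
    linarith
  exact max_eq_left ((min_le_right _ _).trans (by linarith))

theorem relCut_eq_one {o : M} {E : Set M} {r c : ℝ} (hr : 0 < r) {x : M}
    (hx : x ∈ relNbhd o E ((c - 1) * r)) : relCut o E r c x = 1 := by
  have hp : 0 < 1 + dist x o := by positivity
  simp only [relNbhd, mem_ofPred_eq] at hx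
  have : infDist x E / (r * (1 + dist x o)) ≤ c - 1 := by
    rw [div_le_iff₀ (by positivity)]
    linarith
  unfold relCut
  rw [min_eq_left (by linarith), max_eq_right zero_le_one]

theorem abs_clip_sub_le (a b : ℝ) : |max 0 (min 1 a) - max 0 (min 1 b)| ≤ |a - b| := by
  refine (abs_max_sub_max_le_max _ _ _ _).trans ?_
  simp only [sub_self, abs_zero]
  refine max_le (abs_nonneg _) ((abs_min_sub_min_le_max _ _ _ _).trans ?_)
  simp

theorem relCut_lip {o : M} {E : Set M} (ho : o ∈ E) {r : ℝ} (hr : 0 < r) (c : ℝ) (x y : M) :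
    |relCut o E r c x - relCut o E r c y| * dist x o ≤ 2 / r * dist x y := by
  have hpx : 0 < 1 + dist x o := by positivity
  have hpy : 0 < 1 + dist y o := by positivity
  have hiy : infDist y E ≤ dist y o := infDist_le_dist_of_mem ho
  have hiy0 : 0 ≤ infDist y E := infDist_nonneg
  obtain ⟨t, ht⟩ : ∃ t, t = infDist y E / (1 + dist y o) := ⟨_, rfl⟩
  have ht0 : 0 ≤ t := ht ▸ by positivity
  have ht1 : t ≤ 1 := by rw [ht, div_le_one hpy]; linarith
  have hty : infDist y E = t * (1 + dist y o) := by rw [ht]; field_simp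
  have h1 : |infDist x E - infDist y E| ≤ dist x y := by
    have := (lipschitz_infDist_pt E).dist_le_mul x y
    simpa [Real.dist_eq] using this
  have h2 : |dist y o - dist x o| ≤ dist x y := by
    rw [dist_comm x y]; exact abs_dist_sub_le y x o
  have e : (c - infDist x E / (r * (1 + dist x o))) - (c - infDist y E / (r * (1 + dist y o)))
      = - ((infDist x E - infDist y E) + t * (dist y o - dist x o)) / (r * (1 + dist x o)) := by
    rw [hty]; field_simp; ring
  calc |relCut o E r c x - relCut o E r c y| * dist x o
      ≤ |(c - infDist x E / (r * (1 + dist x o))) - (c - infDist y E / (r * (1 + dist y o)))|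
        * (1 + dist x o) := by
        refine mul_le_mul (abs_clip_sub_le _ _) (by linarith) dist_nonneg (abs_nonneg _)
    _ = |(infDist x E - infDist y E) + t * (dist y o - dist x o)| / r := by
        rw [e, abs_div, abs_neg, abs_of_pos (mul_pos hr hpx)]; field_simp
    _ ≤ (dist x y + 1 * dist x y) / r := by
        gcongr
        refine (abs_add_le _ _).trans (add_le_add h1 ?_)
        rw [abs_mul, abs_of_nonneg ht0]
        gcongr
    _ = 2 / r * dist x y := by ring

theorem relCut_smul_lip {o : M} {E : Set M} (ho : o ∈ E) {r : ℝ} (hr : 0 < r) (c : ℝ)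
    {X : Type*} [NormedAddCommGroup X] [NormedSpace ℝ X] {v : M → X} (hv : LipschitzWith 1 v)
    (hv0 : v o = 0) :
    LipschitzWith (Real.toNNReal (2 / r + 1)) fun x => relCut o E r c x • v x := by
  refine LipschitzWith.of_dist_le_mul fun x y => ?_
  rw [Real.coe_toNNReal _ (by positivity), dist_eq_norm]
  have hvx : ‖v x‖ ≤ dist x o := by
    have := hv.dist_le_mul x o
    simpa [hv0] using this
  have hvxy : ‖v x - v y‖ ≤ dist x y := by
    have := hv.dist_le_mul x y
    simpa [dist_eq_norm] using this
  have e : relCut o E r c x • v x - relCut o E r c y • v y =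
      (relCut o E r c x - relCut o E r c y) • v x + relCut o E r c y • (v x - v y) := by
    rw [sub_smul, smul_sub]; abel
  rw [e]
  refine (norm_add_le _ _).trans ?_
  rw [norm_smul, norm_smul, Real.norm_eq_abs, Real.norm_eq_abs, add_mul]
  refine add_le_add ((mul_le_mul_of_nonneg_left hvx (abs_nonneg _)).trans
    (relCut_lip ho hr c x y)) ?_
  rw [abs_of_nonneg (relCut_nonneg _ _ _ _ _)]
  exact mul_le_mul (relCut_le_one _ _ _ _ _) hvxy (norm_nonneg _) zero_le_one

end Cut

section Reduction

variable {M : Type*} [MetricSpace M] {o : M}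
  {F : Type*} [NormedAddCommGroup F] [NormedSpace ℝ F] {δ : M → F}

/-- Elements of `F` are approximated by elements supported on a finite set. -/
theorem IsLipschitzFree.exists_finite_approx (hδ : IsLipschitzFree o δ) (μ : F) {η : ℝ}
    (hη : 0 < η) : ∃ (A : Finset M) (γ : F), ‖μ - γ‖ < η ∧
      ∀ f g : F →L[ℝ] ℝ, (∀ x ∈ A, f (δ x) = g (δ x)) → f γ = g γ := by
  obtain ⟨γ, hγ, hd⟩ := Metric.mem_closure_iff.1 (hδ.dense_span μ) η hη
  obtain ⟨a, rfl⟩ := (Finsupp.mem_span_range_iff_exists_finsupp).1 hγ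
  refine ⟨a.support, _, by rwa [← dist_eq_norm], fun f g h => ?_⟩
  simp only [Finsupp.sum, map_sum, map_smul]
  exact Finset.sum_congr rfl fun x hx => by rw [h x hx]

/-- (V*)-sets are almost supported on relative neighbourhoods of finite sets (in a dual form). -/
theorem IsLipschitzFree.exists_finite_relNbhd (hδ : IsLipschitzFree o δ) {Γ : Set F}
    (hΓ : IsVStarSet Γ) {r ε : ℝ} (hr : 0 < r) (hε : 0 < ε) :
    ∃ E : Finset M, o ∈ E ∧ ∀ μ ∈ Γ, ∀ f : F →L[ℝ] ℝ, ‖f‖ ≤ 1 →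
      (∀ x ∈ relNbhd o (E : Set M) r, f (δ x) = 0) → |f μ| ≤ ε := by
  classical
  by_contra hcon
  push Not at hcon
  set C : NNReal := Real.toNNReal (2 / r + 1) with hC
  have step : ∀ E : Finset M, o ∈ E → ∃ E' : Finset M, ∃ μ : F, ∃ G : F →L[ℝ] ℝ,
      E ⊆ E' ∧ μ ∈ Γ ∧ (LipschitzWith C fun x => G (δ x)) ∧
      (∀ x ∈ relNbhd o (E : Set M) r, G (δ x) = 0) ∧
      (∀ x, x ∉ relNbhd o (E' : Set M) r → G (δ x) = 0) ∧ ε / 2 < |G μ| := by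
    intro E hE
    obtain ⟨μ, hμ, f, hf, hf0, hfμ⟩ := hcon E hE
    obtain ⟨A, γ, hγ, hA⟩ := hδ.exists_finite_approx μ (η := ε / 2 / (1 + C)) (by positivity)
    have hE' : o ∈ ((E ∪ A : Finset M) : Set M) := by simp [hE]
    have hfl : LipschitzWith 1 fun x => f (δ x) := by
      refine LipschitzWith.of_dist_le_mul fun x y => ?_
      rw [dist_eq_norm, ← map_sub, ← hδ.isometry.dist_eq x y, dist_eq_norm]
      refine (f.le_opNorm _).trans ?_
      gcongr
      simpa using hf
    have hl := relCut_smul_lip hE' hr 1 hfl (by simp [hδ.map_base])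
    obtain ⟨G, hG, hG'⟩ := hδ.lift C _ hl (by simp [hδ.map_base])
    refine ⟨E ∪ A, μ, G, Finset.subset_union_left, hμ, ?_, ?_, ?_, ?_⟩
    · simpa only [hG'] using hl
    · intro x hx
      rw [hG', hf0 x hx, smul_zero]
    · intro x hx
      rw [hG', relCut_eq_zero hr (by rwa [one_mul]), zero_smul]
    · have h1 : f γ = G γ := hA f G fun x hx => by
        rw [hG', relCut_eq_one hr, one_smul]
        simp only [relNbhd, mem_ofPred_eq, sub_self, zero_mul]
        exact (infDist_zero_of_mem (by simp [hx])).le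
      have h2 : f μ = G μ + (f (μ - γ) - G (μ - γ)) := by
        simp [h1]
      have h3 : |f (μ - γ)| ≤ 1 * ‖μ - γ‖ := f.le_of_opNorm_le hf _
      have h4 : |G (μ - γ)| ≤ C * ‖μ - γ‖ := G.le_of_opNorm_le hG _
      have h5 : (1 + C) * ‖μ - γ‖ ≤ ε / 2 := by
        rw [mul_comm, ← le_div_iff₀ (by positivity)]; exact hγ.le
      have h6 : |f μ| ≤ |G μ| + (|f (μ - γ)| + |G (μ - γ)|) := by
        rw [h2]
        exact (abs_add_le _ _).trans (add_le_add le_rfl (abs_sub _ _))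
      linarith
  choose! nxt μ G h1 h2 h3 h4 h5 h6 using step
  let Es : ℕ → Finset M := fun n => Nat.rec {o} (fun _ E => nxt E) n
  have hs : ∀ n, Es (n + 1) = nxt (Es n) := fun n => rfl
  have ho : ∀ n, o ∈ Es n := by
    intro n
    induction n with
    | zero => simp [Es]
    | succ n ih => rw [hs]; exact h1 _ ih ih
  have hmono : Monotone Es := monotone_nat_of_le_succ fun n => by
    rw [hs]; exact h1 _ (ho n)
  have hlt : ∀ x m n, m < n → G (Es m) (δ x) ≠ 0 → G (Es n) (δ x) = 0 := by
    intro x m n hmn hm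
    refine h4 _ (ho n) x ?_
    have : x ∈ relNbhd o (nxt (Es m) : Set M) r := by
      by_contra hx
      exact hm (h5 _ (ho m) x hx)
    rw [← hs] at this
    exact relNbhd_mono (by simpa using ho (m + 1)) (by simpa using hmono hmn) r this
  have hw : IsWUC fun n => G (Es n) := by
    refine hδ.isWUC (C := C) (fun n => h3 _ (ho n)) fun x m n hm hn => ?_
    rcases lt_trichotomy m n with h | h | h
    · exact absurd (hlt x m n h hm) hn
    · exact h
    · exact absurd (hlt x n m h hn) hm
  obtain ⟨n, hn⟩ := (hΓ _ hw (ε / 2) (by positivity)).exists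
  exact absurd (hn _ (h2 _ (ho n))) (not_le.2 (h6 _ (ho n)))

/-- One step of the compact reduction. -/
theorem IsLipschitzFree.exists_reduction [CompleteSpace F] (hδ : IsLipschitzFree o δ) {Γ : Set F}
    (hΓ : IsVStarSet Γ) {r ε : ℝ} (hr : 0 < r) (hε : 0 < ε) :
    ∃ (E : Finset M) (S : F →L[ℝ] F), o ∈ E ∧
      (∀ x, ∃ c : ℝ, S (δ x) = c • δ x ∧ (x ∉ relNbhd o (E : Set M) (2 * r) → c = 0)) ∧
      ∀ μ ∈ Γ, ‖μ - S μ‖ ≤ ε := by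
  set C : NNReal := Real.toNNReal (2 / r + 1) with hC
  obtain ⟨E, hE, hf⟩ := hδ.exists_finite_relNbhd hΓ hr (ε := ε / (1 + C)) (by positivity)
  obtain ⟨S, hS, hS'⟩ := hδ.exists_lift
    (relCut_smul_lip (E := (E : Set M)) (by simpa using hE) hr 2
      hδ.isometry.lipschitz hδ.map_base) (by simp [hδ.map_base])
  refine ⟨E, S, hE, fun x => ⟨_, hS' x, fun hx => relCut_eq_zero hr hx⟩, fun μ hμ => ?_⟩
  obtain ⟨φ, hφ, hφμ⟩ := exists_dual_vector'' ℝ (μ - S μ)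
  have hC1 : (0 : ℝ) < 1 + C := by positivity
  have hbound : ‖((1 + C : ℝ)⁻¹) • (φ - φ.comp S)‖ ≤ 1 := by
    rw [norm_smul, norm_inv, Real.norm_of_nonneg hC1.le, inv_mul_le_iff₀ hC1, mul_one]
    refine (norm_sub_le _ _).trans (add_le_add hφ ?_)
    calc ‖φ.comp S‖ ≤ ‖φ‖ * ‖S‖ := φ.opNorm_comp_le S
      _ ≤ 1 * C := by gcongr
      _ = C := one_mul _
  have := hf μ hμ _ hbound fun x hx => by
    have : relCut o (E : Set M) r 2 x = 1 := relCut_eq_one hr (by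
      have : ((2 : ℝ) - 1) * r = r := by ring
      rwa [this])
    simp [hS', this]
  have e : (((1 + C : ℝ)⁻¹) • (φ - φ.comp S)) μ = (1 + C : ℝ)⁻¹ * ‖μ - S μ‖ := by
    have h' : φ (μ - S μ) = ‖μ - S μ‖ := by simpa using hφμ
    rw [← h']
    simp
  rw [e, abs_of_nonneg (by positivity), inv_mul_eq_div, div_le_div_iff_of_pos_right hC1] at this
  exact this

end Reduction

section Main

variable {M : Type*} [MetricSpace M] {o : M}

theorem exists_limit_of_ultrafilter [CompleteSpace M] {E : ℕ → Finset M} {ρ : ℕ → ℝ}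
    (hE : ∀ j, o ∈ E j) (hρ0 : ρ 0 ≤ 1 / 2) (hρ : Tendsto ρ atTop (𝓝 0))
    (u : Ultrafilter M) (hu : ∀ j, relNbhd o (E j : Set M) (ρ j) ∈ u) :
    ∃ x ∈ ⋂ j, relNbhd o (E j : Set M) (ρ j), (u : Filter M) ≤ 𝓝 x := by
  obtain ⟨R, hR⟩ : ∃ R, ∀ x ∈ relNbhd o (E 0 : Set M) (ρ 0), 1 + dist x o ≤ R := by
    obtain ⟨B, hB⟩ := ((E 0).finite_toSet.isBounded).subset_closedBall o
    refine ⟨2 * B + 2, fun x hx => ?_⟩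
    obtain ⟨e, he, hxe⟩ := (E 0).finite_toSet.isCompact.exists_infDist_eq_dist ⟨o, hE 0⟩ x
    have h1 : infDist x (E 0 : Set M) ≤ ρ 0 * (1 + dist x o) := hx
    have h2 : dist e o ≤ B := hB he
    have h3 := dist_triangle x e o
    have h4 : ρ 0 * (1 + dist x o) ≤ 1 / 2 * (1 + dist x o) := by gcongr
    linarith
  have hR1 : 1 ≤ R := by
    obtain ⟨x, hx⟩ := u.neBot.nonempty_of_mem (hu 0)
    have := hR x hx
    linarith [dist_nonneg (x := x) (y := o)]
  have hc : Cauchy (u : Filter M) := by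
    rw [Metric.cauchy_iff]
    refine ⟨u.neBot, fun ε hε => ?_⟩
    obtain ⟨j, hj⟩ := (hρ.eventually (gt_mem_nhds (show 0 < ε / 2 / R by positivity))).exists
    have hmem : (⋃ e ∈ (E j : Set M), ball e (ε / 2)) ∈ u := by
      filter_upwards [hu 0, hu j] with x h0 hx
      obtain ⟨e, he, hxe⟩ := (E j).finite_toSet.isCompact.exists_infDist_eq_dist ⟨o, hE j⟩ x
      have h1 : infDist x (E j : Set M) ≤ ρ j * (1 + dist x o) := hx
      have h2 := hR x h0
      have hp : 0 < 1 + dist x o := by positivity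
      have h3 : ρ j * (1 + dist x o) < ε / 2 / R * (1 + dist x o) := by gcongr
      have h4 : ε / 2 / R * (1 + dist x o) ≤ ε / 2 / R * R := by gcongr
      have h5 : ε / 2 / R * R = ε / 2 := by field_simp
      simp only [mem_iUnion, mem_ball]
      exact ⟨e, he, by linarith⟩
    obtain ⟨e, he, hb⟩ := (Ultrafilter.finite_biUnion_mem_iff (E j).finite_toSet).1 hmem
    refine ⟨_, hb, fun x hx y hy => ?_⟩
    have := dist_triangle_right x y e
    rw [mem_ball] at hx hy
    linarith
  obtain ⟨x, hx⟩ := CompleteSpace.complete hc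
  refine ⟨x, mem_iInter.2 fun j => ?_, hx⟩
  exact (isClosed_relNbhd o _ _).mem_of_tendsto (f := id) hx (hu j)

theorem isCompact_iInter_relNbhd [CompleteSpace M] {E : ℕ → Finset M} {ρ : ℕ → ℝ}
    (hE : ∀ j, o ∈ E j) (hρ0 : ρ 0 ≤ 1 / 2) (hρ : Tendsto ρ atTop (𝓝 0)) :
    IsCompact (⋂ j, relNbhd o (E j : Set M) (ρ j)) := by
  rw [isCompact_iff_ultrafilter_le_nhds]
  intro u hu
  exact exists_limit_of_ultrafilter hE hρ0 hρ u fun j =>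
    mem_of_superset (le_principal_iff.1 hu) (iInter_subset _ j)

theorem exists_subset_of_iInter_relNbhd_subset [CompleteSpace M] {E : ℕ → Finset M} {ρ : ℕ → ℝ}
    (hE : ∀ j, o ∈ E j) (hρ0 : ρ 0 ≤ 1 / 2) (hρ : Tendsto ρ atTop (𝓝 0)) {U : Set M}
    (hU : IsOpen U) (hKU : (⋂ j, relNbhd o (E j : Set M) (ρ j)) ⊆ U) :
    ∃ k, {x | ∀ j < k, x ∈ relNbhd o (E j : Set M) (ρ j)} ⊆ U := by
  by_contra hcon
  simp only [not_exists, Set.not_subset] at hcon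
  choose y hy hyU using hcon
  let u : Ultrafilter M := (Ultrafilter.of atTop).map y
  have hle : ((Ultrafilter.of atTop : Ultrafilter ℕ) : Filter ℕ) ≤ atTop := Ultrafilter.of_le _
  obtain ⟨x, hx, hux⟩ := exists_limit_of_ultrafilter hE hρ0 hρ u fun j => by
    refine hle ?_
    filter_upwards [eventually_gt_atTop j] with k hk
    exact hy k j hk
  have h1 : U ∈ u := hux (hU.mem_nhds (hKU hx))
  have h2 : ∃ k, y k ∈ U := (Ultrafilter.of atTop).neBot.nonempty_of_mem h1
  obtain ⟨k, hk⟩ := h2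
  exact hyU k hk

variable {F : Type*} [NormedAddCommGroup F] [NormedSpace ℝ F] {δ : M → F}

theorem abs_soft_sub_le {t : ℝ} (ht : 0 ≤ t) (a b : ℝ) :
    |(a - max (-t) (min t a)) - (b - max (-t) (min t b))| ≤ |a - b| := by
  rcases max_cases (-t) (min t a) with h | h <;> rcases min_cases t a with h' | h' <;>
  rcases max_cases (-t) (min t b) with k | k <;> rcases min_cases t b with k' | k' <;>
  rcases abs_cases (a - b) with l | l <;>
  rw [abs_le] <;> constructor <;> linarith

/-- An element lying in `F(cl U)` for all open `U ⊇ K` lies in `F(K)`. -/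
theorem IsLipschitzFree.mem_freeSpan_of_forall_open (hδ : IsLipschitzFree o δ) {K : Set M} {ν : F}
    (h : ∀ U : Set M, IsOpen U → K ⊆ U → ν ∈ freeSpan δ (closure U ∪ {o})) :
    ν ∈ freeSpan δ (K ∪ {o}) := by
  refine mem_topologicalClosure_of_dual _ _ fun f hf => ?_
  have hfK : ∀ x ∈ K, f (δ x) = 0 := fun x hx =>
    hf _ (Submodule.subset_span ⟨x, Or.inl hx, rfl⟩)
  have hfl : LipschitzWith ‖f‖₊ fun x => f (δ x) := by
    have := f.lipschitz.comp hδ.isometry.lipschitz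
    rw [mul_one] at this
    exact this
  suffices hs : ∀ η > (0 : ℝ), |f ν| ≤ η by
    have := le_of_forall_pos_le_add (a := |f ν|) (b := 0) fun η hη => by simpa using hs η hη
    exact abs_nonpos_iff.1 this
  intro η hη
  obtain ⟨γ, hγ, hd⟩ := Metric.mem_closure_iff.1 (hδ.dense_span ν) (η / 2 / (2 * ‖f‖ + 1))
    (by positivity)
  obtain ⟨a, rfl⟩ := (Finsupp.mem_span_range_iff_exists_finsupp).1 hγ
  set A : ℝ := ∑ x ∈ a.support, |a x| with hA
  have hA0 : 0 ≤ A := Finset.sum_nonneg fun _ _ => abs_nonneg _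
  obtain ⟨t, ht, htA⟩ : ∃ t > 0, A * t ≤ η / 2 := by
    refine ⟨η / 2 / (A + 1), by positivity, ?_⟩
    rw [mul_div_assoc', div_le_iff₀ (by positivity)]
    nlinarith
  obtain ⟨G, hG, hG'⟩ := hδ.lift ‖f‖₊
    (fun x => f (δ x) - max (-t) (min t (f (δ x))))
    (LipschitzWith.of_dist_le_mul fun x y => by
      have := hfl.dist_le_mul x y
      rw [Real.dist_eq] at this ⊢
      exact (abs_soft_sub_le ht.le _ _).trans this)
    (by simp [hδ.map_base, ht.le])
  have hU : IsOpen {x | |f (δ x)| < t} :=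
    isOpen_lt (hfl.continuous.abs) continuous_const
  have hν := h _ hU fun x hx => by simp [hfK x hx, ht]
  have hcl : ∀ x ∈ closure {x | |f (δ x)| < t} ∪ {o}, G (δ x) = 0 := by
    rintro x (hx | hx)
    · have : |f (δ x)| ≤ t := closure_lt_subset_le hfl.continuous.abs continuous_const hx
      rw [abs_le] at this
      rw [hG', min_eq_right this.2, max_eq_right this.1, sub_self]
    · rw [mem_singleton_iff.1 hx, hδ.map_base, map_zero]
  have hGν : G ν = 0 := by
    have hle : freeSpan δ (closure {x | |f (δ x)| < t} ∪ {o}) ≤ LinearMap.ker G.toLinearMap := by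
      refine Submodule.topologicalClosure_minimal _ ?_ G.isClosed_ker
      rw [Submodule.span_le]
      rintro _ ⟨x, hx, rfl⟩
      exact hcl x hx
    exact hle hν
  set γ := a.sum fun i c => c • δ i with hγdef
  have hγ1 : |(f - G) γ| ≤ η / 2 := by
    rw [hγdef, Finsupp.sum, map_sum]
    refine (Finset.abs_sum_le_sum_abs _ _).trans (le_trans ?_ htA)
    rw [hA, Finset.sum_mul]
    refine Finset.sum_le_sum fun x _ => ?_
    rw [map_smul, smul_eq_mul, abs_mul]
    gcongr
    simp only [sub_apply, hG', sub_sub_cancel]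
    rw [abs_le]
    exact ⟨le_max_left _ _, max_le (by linarith) (min_le_left _ _)⟩
  have hγ2 : |(f - G) (ν - γ)| ≤ η / 2 := by
    have hn : ‖f - G‖ ≤ 2 * ‖f‖ + 1 := by
      refine (norm_sub_le _ _).trans ?_
      have : ‖G‖ ≤ ‖f‖ := hG
      linarith
    refine ((f - G).le_of_opNorm_le hn _).trans ?_
    rw [dist_eq_norm, lt_div_iff₀ (by positivity)] at hd
    linarith
  have e : f ν = (f - G) γ + (f - G) (ν - γ) := by
    rw [← map_add]; simp [hGν]
  rw [e]
  exact (abs_add_le _ _).trans (by linarith)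

/-- Compact reduction for (V*)-sets. -/
theorem IsLipschitzFree.compact_reduction [CompleteSpace M] [CompleteSpace F]
    (hδ : IsLipschitzFree o δ) {Γ : Set F} (hΓ : IsVStarSet Γ) {ε : ℝ} (hε : 0 < ε) :
    ∃ (K : Set M) (Γ' : Set F), IsCompact K ∧ Γ' ⊆ (freeSpan δ (K ∪ {o}) : Set F) ∧
      (∀ U : Set M, IsOpen U → K ⊆ U → IsVStarSetWithin Γ' (freeSpan δ (closure U ∪ {o}))) ∧
      ∀ μ ∈ Γ, ∃ ν ∈ Γ', ‖μ - ν‖ ≤ ε := by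
  have hstep := fun (k : ℕ) (T : F →L[ℝ] F) =>
    hδ.exists_reduction (hΓ.image_clm T) (r := 1 / 4 * (1 / 2) ^ k) (ε := ε / 2 / 2 ^ k)
      (by positivity) (by positivity)
  choose E S hE hS hμ using hstep
  let T : ℕ → (F →L[ℝ] F) := fun n =>
    Nat.rec (ContinuousLinearMap.id ℝ F) (fun k T => (S k T).comp T) n
  have hT : ∀ k, T (k + 1) = (S k (T k)).comp (T k) := fun _ => rfl
  let ρ : ℕ → ℝ := fun k => 2 * (1 / 4 * (1 / 2) ^ k)
  have hρ0 : ρ 0 ≤ 1 / 2 := by norm_num [ρ]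
  have hρ : Tendsto ρ atTop (𝓝 0) := by
    have := (tendsto_pow_atTop_nhds_zero_of_lt_one (r := (1 / 2 : ℝ)) (by norm_num)
      (by norm_num)).const_mul (2 * (1 / 4))
    simpa [ρ, mul_assoc] using this
  let A : ℕ → Finset M := fun k => E k (T k)
  have hA : ∀ j, o ∈ A j := fun j => hE _ _
  let N : ℕ → Set M := fun k => {x | ∀ j < k, x ∈ relNbhd o (A j : Set M) (ρ j)}
  have hN : Antitone N := fun k l hkl x hx j hj => hx j (hj.trans_le hkl)
  have hTδ : ∀ k x, ∃ c : ℝ, T k (δ x) = c • δ x ∧ (x ∉ N k → c = 0) := by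
    intro k x
    induction k with
    | zero => exact ⟨1, by simp [T], fun hx => absurd (fun j hj => absurd hj (by omega)) hx⟩
    | succ k ih =>
      obtain ⟨c, hc, hc0⟩ := ih
      obtain ⟨d, hd, hd0⟩ := hS k (T k) x
      refine ⟨c * d, by rw [hT, ContinuousLinearMap.comp_apply, hc, map_smul, hd, smul_smul], ?_⟩
      intro hx
      by_cases hxk : x ∈ N k
      · rw [hd0, mul_zero]
        intro hx'
        refine hx fun j hj => ?_
        rcases Nat.lt_succ_iff_lt_or_eq.1 hj with h | h
        · exact hxk j h
        · rw [h]; exact hx'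
      · rw [hc0 hxk, zero_mul]
  have hTmem : ∀ k (W : Set M), N k ⊆ W → ∀ μ, T k μ ∈ freeSpan δ W := by
    intro k W hW μ
    have hcl : IsClosed {μ | T k μ ∈ freeSpan δ W} :=
      (Submodule.isClosed_topologicalClosure _).preimage (T k).continuous
    have hsub : (Submodule.span ℝ (Set.range δ) : Set F) ⊆ {μ | T k μ ∈ freeSpan δ W} := by
      have : Submodule.span ℝ (Set.range δ) ≤ (freeSpan δ W).comap (T k).toLinearMap := by
        rw [Submodule.span_le]
        rintro _ ⟨x, rfl⟩
        obtain ⟨c, hc, hc0⟩ := hTδ k x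
        change T k (δ x) ∈ freeSpan δ W
        rw [hc]
        by_cases hx : x ∈ N k
        · exact Submodule.smul_mem _ _ (mem_freeSpan δ (hW hx))
        · rw [hc0 hx, zero_smul]; exact Submodule.zero_mem _
      exact this
    exact closure_minimal hsub hcl (hδ.dense_span μ)
  have hdist : ∀ μ ∈ Γ, ∀ k, dist (T k μ) (T (k + 1) μ) ≤ ε / 2 / 2 ^ k := by
    intro μ hμΓ k
    rw [dist_eq_norm]
    exact hμ k (T k) _ ⟨μ, hμΓ, rfl⟩
  have hlim : ∀ μ ∈ Γ, ∃ ν, Tendsto (fun k => T k μ) atTop (𝓝 ν) := fun μ hμΓ =>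
    cauchySeq_tendsto_of_complete (cauchySeq_of_le_geometric_two (hdist μ hμΓ))
  choose! τ hτ using hlim
  have hτd : ∀ μ ∈ Γ, ∀ k, dist (T k μ) (τ μ) ≤ ε / 2 ^ k := fun μ hμΓ k =>
    dist_le_of_le_geometric_two_of_tendsto (hdist μ hμΓ) (hτ μ hμΓ) k
  have hV : ∀ U : Set M, IsOpen U → (⋂ j, relNbhd o (A j : Set M) (ρ j)) ⊆ U →
      IsVStarSetWithin (τ '' Γ) (freeSpan δ (closure U ∪ {o})) := by
    intro U hU hKU
    obtain ⟨k₀, hk₀⟩ := exists_subset_of_iInter_relNbhd_subset hA hρ0 hρ hU hKU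
    have hmem : ∀ k ≥ k₀, ∀ μ, T k μ ∈ freeSpan δ (closure U ∪ {o}) := fun k hk =>
      hTmem k _ (((hN hk).trans hk₀).trans (subset_closure.trans subset_union_left))
    have hclosed : IsClosed (freeSpan δ (closure U ∪ {o}) : Set F) :=
      Submodule.isClosed_topologicalClosure _
    have : CompleteSpace (freeSpan δ (closure U ∪ {o})) := hclosed.completeSpace_coe
    refine ⟨?_, IsVStarSet.of_approx fun η hη => ?_⟩
    · rintro _ ⟨μ, hμΓ, rfl⟩
      refine hclosed.mem_of_tendsto (hτ μ hμΓ) ?_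
      filter_upwards [eventually_ge_atTop k₀] with k hk using hmem k hk μ
    · obtain ⟨k, hk, hkη⟩ : ∃ k ≥ k₀, ε / 2 ^ k ≤ η := by
        have h1 : Tendsto (fun k : ℕ => ε / 2 ^ k) atTop (𝓝 0) := by
          have := (tendsto_pow_atTop_nhds_zero_of_lt_one (r := (1 / 2 : ℝ)) (by norm_num)
            (by norm_num)).const_mul ε
          simpa [div_eq_mul_inv] using this
        have h2 := (h1.eventually (gt_mem_nhds hη)).and (eventually_ge_atTop k₀)
        obtain ⟨k, hk1, hk2⟩ := h2.exists
        exact ⟨k, hk2, hk1.le⟩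
      refine ⟨_, hΓ.image_clm ((T k).codRestrict _ (hmem k hk)), ?_⟩
      rintro ⟨y, hyS⟩ ⟨μ, hμΓ, hy⟩
      refine ⟨_, ⟨μ, hμΓ, rfl⟩, ?_⟩
      have := (hτd μ hμΓ k).trans hkη
      rw [dist_comm, dist_eq_norm] at this
      simp only at hy
      subst hy
      simpa using this
  refine ⟨⋂ j, relNbhd o (A j : Set M) (ρ j), τ '' Γ, isCompact_iInter_relNbhd hA hρ0 hρ, ?_, hV,
    fun μ hμΓ => ⟨_, ⟨μ, hμΓ, rfl⟩, ?_⟩⟩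
  · rintro ν hν
    exact hδ.mem_freeSpan_of_forall_open fun U hU hKU => (hV U hU hKU).1 hν
  · have := hτd μ hμΓ 0
    rw [dist_eq_norm] at this
    simpa [T] using this

end Main

/-- Suppose that for every compact `K ⊆ M` and every `Γ ⊆ F(K)`, if `Γ` is a (V*)-set
with respect to `F(cl(U))` for every open `U ⊇ K`, then `Γ` is a (V*)-set with respect to
`F(L)` for some compact `L ⊇ K`.  Then property (V*) is compactly determined for `F(M)`:
if `F(K ∪ {0})` has property (V*) for every compact `K ⊆ M`, then `F(M)` has
property (V*). -/
theorem propertyVStar_compactlyDetermined_of_vStar_localization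
    {M : Type*} [MetricSpace M] [CompleteSpace M] (o : M)
    {F : Type*} [NormedAddCommGroup F] [NormedSpace ℝ F] [CompleteSpace F]
    (δ : M → F) (hδ : IsLipschitzFree o δ)
    (hcond : ∀ K : Set M, IsCompact K → ∀ Γ : Set F,
      Γ ⊆ (freeSpan δ (K ∪ {o}) : Set F) →
      (∀ U : Set M, IsOpen U → K ⊆ U →
        IsVStarSetWithin Γ (freeSpan δ (closure U ∪ {o}))) →
      ∃ L : Set M, IsCompact L ∧ K ⊆ L ∧
        IsVStarSetWithin Γ (freeSpan δ (L ∪ {o})))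
    (hcpt : ∀ K : Set M, IsCompact K → HasPropertyVStar ↥(freeSpan δ (K ∪ {o}))) :
    HasPropertyVStar F := by
  intro Γ hΓ
  refine relWeaklyCompact_of_approx fun ε hε => ?_
  obtain ⟨K, Γ', hK, hsub, hV, happ⟩ := hδ.compact_reduction hΓ hε
  obtain ⟨L, hL, -, hΓL, hVL⟩ := hcond K hK Γ' hsub hV
  have hc := hcpt L hL _ hVL
  refine ⟨_, hc.image (WeakSpace.map (freeSpan δ (L ∪ {o})).subtypeL).continuous, fun x hx => ?_⟩
  obtain ⟨y, hy, hxy⟩ := happ x hx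
  exact ⟨y, ⟨_, subset_closure ⟨⟨y, hΓL hy⟩, hy, rfl⟩, rfl⟩, hxy⟩
end
end

section
/- Let M be a complete pointed metric space such that for every compact K ⊂ M containing 0 and every WUC series Σ_n f_n in Lip_0(K) there exists a WUC series Σ_n g_n in Lip_0(M) with g_n restricted to K equal to f_n for every n. Then property (V*) is compactly determined for F(M): if F(K∪{0}) has property (V*) for every compact K ⊂ M, then F(M) has property (V*). -/
open Filter Topology Metric Set

noncomputable section

section General

variable {X : Type*} [NormedAddCommGroup X] [NormedSpace ℝ X]

theorem aux_wuc_bounded {f : ℕ → (X →L[ℝ] ℝ)} (hf : IsWUC f) : ∃ C, 0 ≤ C ∧ ∀ n, ‖f n‖ ≤ C := by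
  have h := banach_steinhaus
    (g := fun n => NormedSpace.inclusionInDoubleDual ℝ (X →L[ℝ] ℝ) (f n)) (by
      intro φ
      obtain ⟨C, hC⟩ := (hf φ).tendsto_atTop_zero.bddAbove_range
      refine ⟨C, fun n => ?_⟩
      have := hC ⟨n, rfl⟩
      simpa [NormedSpace.dual_def] using this)
  obtain ⟨C, hC⟩ := h
  refine ⟨C, (norm_nonneg _).trans (hC 0), fun n => ?_⟩
  refine le_trans (le_of_eq ?_) (hC n)
  exact ((NormedSpace.inclusionInDoubleDualLi ℝ (E := X →L[ℝ] ℝ)).norm_map (f n)).symm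

theorem aux_vstar_image {Y : Type*} [NormedAddCommGroup Y] [NormedSpace ℝ Y]
    {Γ : Set X} (h : IsVStarSet Γ) (T : X →L[ℝ] Y) :
    IsVStarSet (T '' Γ) := by
  intro f hf ε hε
  have : IsWUC (fun n => (f n).comp T) := by
    intro φ
    exact hf (φ.comp ((ContinuousLinearMap.compL ℝ X Y ℝ).flip T))
  filter_upwards [h _ this ε hε] with n hn
  rintro _ ⟨x, hx, rfl⟩
  exact hn x hx

theorem aux_vstar_approx {A : Set X}
    (h : ∀ ε > (0 : ℝ), ∃ B : Set X, IsVStarSet B ∧ ∀ a ∈ A, ∃ b ∈ B, ‖a - b‖ ≤ ε) :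
    IsVStarSet A := by
  intro f hf ε hε
  obtain ⟨C, hC0, hC⟩ := aux_wuc_bounded hf
  obtain ⟨B, hB, hAB⟩ := h (ε / 2 / (C + 1)) (by positivity)
  filter_upwards [hB f hf (ε / 2) (by positivity)] with n hn a ha
  obtain ⟨b, hb, hab⟩ := hAB a ha
  have h1 : |f n (a - b)| ≤ ε / 2 := by
    calc |f n (a - b)| = ‖f n (a - b)‖ := rfl
      _ ≤ ‖f n‖ * ‖a - b‖ := (f n).le_opNorm _
      _ ≤ (C + 1) * (ε / 2 / (C + 1)) := by
          gcongr
          linarith [hC n]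
      _ = ε / 2 := by field_simp
  have h2 := hn b hb
  have : f n a = f n (a - b) + f n b := by simp
  rw [this]
  linarith [abs_add_le (f n (a - b)) (f n b)]

theorem aux_weak_eval_continuous (φ : X →L[ℝ] ℝ) :
    Continuous (fun x : WeakSpace ℝ X => φ ((toWeakSpace ℝ X).symm x)) :=
  WeakBilin.eval_continuous (topDualPairing ℝ X).flip φ

theorem aux_weak_le_nhds {l : Filter (WeakSpace ℝ X)} {y : X}
    (h : ∀ φ : X →L[ℝ] ℝ, Tendsto (fun x => φ ((toWeakSpace ℝ X).symm x)) l (𝓝 (φ y))) :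
    l ≤ 𝓝 (toWeakSpace ℝ X y) := by
  have : Tendsto (id : WeakSpace ℝ X → WeakSpace ℝ X) l (𝓝 (toWeakSpace ℝ X y)) := by
    refine (WeakBilin.tendsto_iff_forall_eval_tendsto (B := (topDualPairing ℝ X).flip) ?_).2 h
    intro a b hab
    by_contra hne
    obtain ⟨f, hf⟩ := SeparatingDual.exists_separating_of_ne (R := ℝ) hne
    exact hf (congrArg (fun L => L f) hab)
  exact this

theorem aux_norm_le_of_forall {x : X} {c : ℝ} (hc : 0 ≤ c)
    (h : ∀ φ : X →L[ℝ] ℝ, ‖φ‖ ≤ 1 → φ x ≤ c) : ‖x‖ ≤ c := by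
  by_cases hx : x = 0
  · simpa [hx] using hc
  obtain ⟨φ, h1, h2⟩ := exists_dual_vector ℝ x (by simpa using hx)
  have := h φ h1.le
  rw [h2] at this
  simpa using this

/-- Grothendieck's lemma, closed version. -/
theorem aux_groth_closed [CompleteSpace X] {S : Set (WeakSpace ℝ X)} (hS : IsClosed S)
    (h : ∀ ε > (0 : ℝ), ∃ C : Set (WeakSpace ℝ X), IsCompact C ∧
      ∀ x ∈ S, ∃ c ∈ C, ‖(toWeakSpace ℝ X).symm x - (toWeakSpace ℝ X).symm c‖ ≤ ε) :
    IsCompact S := by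
  rw [isCompact_iff_ultrafilter_le_nhds]
  intro U hU
  set J := (toWeakSpace ℝ X).symm with hJ
  have hSU : ∀ᶠ x in (U : Filter (WeakSpace ℝ X)), x ∈ S := by simpa using hU
  -- for every ε a point y with all functionals close
  have key : ∀ ε > (0 : ℝ), ∃ y : X, ∀ φ : X →L[ℝ] ℝ, ‖φ‖ ≤ 1 →
      ∀ η > (0 : ℝ), ∀ᶠ x in (U : Filter (WeakSpace ℝ X)), |φ (J x) - φ y| ≤ ε + η := by
    intro ε hε
    obtain ⟨C, hC, hSC⟩ := h ε hε
    have : ∀ x, ∃ c, x ∈ S → c ∈ C ∧ ‖J x - J c‖ ≤ ε := by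
      intro x
      by_cases hx : x ∈ S
      · obtain ⟨c, hc⟩ := hSC x hx
        exact ⟨c, fun _ => hc⟩
      · exact ⟨0, fun h => absurd h hx⟩
    choose a ha using this
    have hCU : ((U.map a : Ultrafilter _) : Filter (WeakSpace ℝ X)) ≤ 𝓟 C := by
      rw [le_principal_iff]
      show a ⁻¹' C ∈ (U : Filter _)
      filter_upwards [hSU] with x hx using (ha x hx).1
    obtain ⟨y, hy, hlim⟩ := isCompact_iff_ultrafilter_le_nhds.1 hC _ hCU
    refine ⟨J y, fun φ hφ η hη => ?_⟩
    have h1 : Tendsto (fun x => φ (J (a x))) U (𝓝 (φ (J y))) :=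
      ((aux_weak_eval_continuous φ).tendsto y).comp hlim
    have h2 := (Metric.tendsto_nhds.1 h1) η hη
    filter_upwards [hSU, h2] with x hx hx2
    have h3 : |φ (J x) - φ (J (a x))| ≤ ε := by
      rw [← map_sub]
      calc |φ (J x - J (a x))| = ‖φ (J x - J (a x))‖ := rfl
        _ ≤ 1 * ‖J x - J (a x)‖ := φ.le_of_opNorm_le hφ _
        _ ≤ ε := by linarith [(ha x hx).2]
    rw [Real.dist_eq] at hx2
    calc |φ (J x) - φ (J y)| = |(φ (J x) - φ (J (a x))) + (φ (J (a x)) - φ (J y))| := by ring_nf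
      _ ≤ _ := abs_add_le _ _
      _ ≤ ε + η := by linarith
  have hpos : ∀ n : ℕ, (0 : ℝ) < (1 / 2) ^ n := fun n => by positivity
  choose y hy using fun n : ℕ => key ((1 / 2) ^ n) (hpos n)
  have hdist : ∀ n m, ‖y n - y m‖ ≤ (1 / 2) ^ n + (1 / 2) ^ m := by
    intro n m
    apply aux_norm_le_of_forall (by positivity)
    intro φ hφ
    apply le_of_forall_pos_le_add
    intro η hη
    obtain ⟨x, h1, h2⟩ := ((hy n φ hφ (η / 2) (by positivity)).and
      (hy m φ hφ (η / 2) (by positivity))).exists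
    rw [map_sub]
    rw [abs_le] at h1 h2
    linarith [h1.1, h1.2, h2.1, h2.2]
  have hcau : CauchySeq y := by
    refine cauchySeq_of_le_geometric (1 / 2) 2 (by norm_num) fun n => ?_
    rw [dist_eq_norm]
    refine (hdist n (n + 1)).trans ?_
    rw [pow_succ]
    linarith [hpos n]
  obtain ⟨z, hz⟩ := cauchySeq_tendsto_of_complete hcau
  have hlim : (U : Filter (WeakSpace ℝ X)) ≤ 𝓝 (toWeakSpace ℝ X z) := by
    apply aux_weak_le_nhds
    have hnorm1 : ∀ φ : X →L[ℝ] ℝ, ‖φ‖ ≤ 1 → Tendsto (fun x => φ (J x)) U (𝓝 (φ z)) := by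
      intro φ hφ
      rw [Metric.tendsto_nhds]
      intro ε hε
      have e1 : ∀ᶠ n in atTop, dist (φ (y n)) (φ z) < ε / 4 :=
        Metric.tendsto_nhds.1 ((φ.continuous.tendsto z).comp hz) _ (by positivity)
      have e2 : ∀ᶠ n : ℕ in atTop, (1 / 2 : ℝ) ^ n < ε / 4 :=
        (tendsto_pow_atTop_nhds_zero_of_lt_one (by norm_num) (by norm_num)).eventually_lt_const
          (by positivity)
      obtain ⟨n, h1, h2⟩ := (e1.and e2).exists
      filter_upwards [hy n φ hφ (ε / 4) (by positivity)] with x hx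
      rw [Real.dist_eq] at h1 ⊢
      calc |φ (J x) - φ z| = |(φ (J x) - φ (y n)) + (φ (y n) - φ z)| := by ring_nf
        _ ≤ _ := abs_add_le _ _
        _ < ε := by linarith
    intro φ
    have := (hnorm1 ((‖φ‖ + 1)⁻¹ • φ) (by
      rw [norm_smul, norm_inv, Real.norm_of_nonneg (by positivity)]
      rw [inv_mul_le_iff₀ (by positivity)]
      linarith)).const_mul (‖φ‖ + 1)
    have hne : ‖φ‖ + 1 ≠ 0 := by positivity
    simpa [hne, mul_inv_cancel_left₀] using this
  exact ⟨_, isClosed_iff_ultrafilter.1 hS _ U hlim (by simpa using hU), hlim⟩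

open Pointwise in
/-- Grothendieck's lemma. -/
theorem aux_groth [CompleteSpace X] {Γ : Set X}
    (h : ∀ ε > (0 : ℝ), ∃ A : Set X, RelWeaklyCompact A ∧
      ∀ x ∈ Γ, ∃ a ∈ A, ‖x - a‖ ≤ ε) : RelWeaklyCompact Γ := by
  refine aux_groth_closed isClosed_closure fun ε hε => ?_
  obtain ⟨A, hA, hΓ⟩ := h ε hε
  refine ⟨_, hA, ?_⟩
  have hball : IsClosed ((toWeakSpace ℝ X) '' closedBall (0 : X) ε) := by
    have := (convex_closedBall (0 : X) ε).toWeakSpace_closure ℝ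
    rw [Metric.isClosed_closedBall.closure_eq] at this
    rw [this]
    exact isClosed_closure
  have hcl := hball.add_left_of_isCompact hA
  have hsub : closure ((toWeakSpace ℝ X) '' Γ) ⊆
      closure ((toWeakSpace ℝ X) '' A) + (toWeakSpace ℝ X) '' closedBall (0 : X) ε := by
    apply closure_minimal _ hcl
    rintro _ ⟨x, hx, rfl⟩
    obtain ⟨a, ha, hxa⟩ := hΓ x hx
    refine ⟨toWeakSpace ℝ X a, subset_closure ⟨a, ha, rfl⟩, toWeakSpace ℝ X (x - a),
      ⟨x - a, by simpa using hxa, rfl⟩, ?_⟩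
    simp
  intro x hx
  obtain ⟨c, hc, _, ⟨b, hb, rfl⟩, rfl⟩ := hsub hx
  refine ⟨c, hc, ?_⟩
  simpa using hb

/-- Relative weak compactness passes from a subspace to the whole space. -/
theorem aux_relWeaklyCompact_image {Y : Type*} [NormedAddCommGroup Y] [NormedSpace ℝ Y]
    (T : X →L[ℝ] Y) {A : Set X} (hA : RelWeaklyCompact A) : RelWeaklyCompact (T '' A) := by
  have hcont : Continuous (WeakSpace.map T) := ContinuousLinearMap.continuous _
  have h1 := hA.image hcont
  refine IsCompact.of_isClosed_subset h1 isClosed_closure (closure_minimal ?_ h1.isClosed)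
  rintro _ ⟨_, ⟨x, hx, rfl⟩, rfl⟩
  exact ⟨toWeakSpace ℝ X x, subset_closure ⟨x, hx, rfl⟩, rfl⟩

end General

section Free

/-- Normalised distance to a finite set. -/
def auxQ {M : Type*} [MetricSpace M] (o : M) (E : Finset M) (y : M) : ℝ :=
  infDist y (insert o (E : Set M)) / (1 + dist y o)

/-- Bump function around a finite set. -/
def auxH {M : Type*} [MetricSpace M] (o : M) (t : ℝ) (E : Finset M) (y : M) : ℝ :=
  min 1 (max 0 (2 - auxQ o E y / t))

variable {M : Type*} [MetricSpace M] {o : M}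

theorem auxQ_nonneg (E : Finset M) (y : M) : 0 ≤ auxQ o E y := by
  unfold auxQ
  have := infDist_nonneg (x := y) (s := insert o (E : Set M))
  positivity

theorem auxQ_mem {E : Finset M} {y : M} (h : y ∈ E) : auxQ o E y = 0 := by
  unfold auxQ
  rw [infDist_zero_of_mem (by simp [h]), zero_div]

theorem auxQ_base (E : Finset M) : auxQ o E o = 0 := by
  unfold auxQ
  rw [infDist_zero_of_mem (by simp), zero_div]

theorem auxQ_anti {E E' : Finset M} (h : E ⊆ E') (y : M) : auxQ o E' y ≤ auxQ o E y := by
  unfold auxQ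
  have : infDist y (insert o (E' : Set M)) ≤ infDist y (insert o (E : Set M)) :=
    infDist_le_infDist_of_subset (Set.insert_subset_insert (by exact_mod_cast h)) ⟨o, by simp⟩
  gcongr

theorem auxQ_lip (E : Finset M) (x y : M) :
    |auxQ o E x - auxQ o E y| * dist y o ≤ 2 * dist x y := by
  unfold auxQ
  set s : Set M := insert o (E : Set M) with hs
  have ho : o ∈ s := by simp [hs]
  have hx0 : infDist x s ≤ dist x o := infDist_le_dist_of_mem ho
  have hx1 : 0 ≤ infDist x s := infDist_nonneg
  have hy1 : 0 ≤ infDist y s := infDist_nonneg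
  have h1 : |infDist x s - infDist y s| ≤ dist x y := by
    have := (lipschitz_infDist_pt s).dist_le_mul x y
    simpa [Real.dist_eq] using this
  have h2 : |dist y o - dist x o| ≤ dist x y := by
    rw [dist_comm x y]; exact abs_dist_sub_le y x o
  have px : 0 < 1 + dist x o := by positivity
  have py : 0 < 1 + dist y o := by positivity
  set a := infDist x s
  set b := infDist y s
  have e : a / (1 + dist x o) - b / (1 + dist y o)
      = ((a - b) * (1 + dist x o) + a * (dist y o - dist x o)) /
        ((1 + dist x o) * (1 + dist y o)) := by
    field_simp
    ring
  rw [e, abs_div, abs_of_pos (mul_pos px py), div_mul_eq_mul_div, div_le_iff₀ (mul_pos px py)]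
  have h3 : |(a - b) * (1 + dist x o) + a * (dist y o - dist x o)| ≤
      2 * dist x y * (1 + dist x o) := by
    refine (abs_add_le _ _).trans ?_
    rw [abs_mul, abs_mul, abs_of_pos px, abs_of_nonneg hx1]
    have : a * |dist y o - dist x o| ≤ (1 + dist x o) * dist x y := by
      gcongr
      linarith
    nlinarith [mul_le_mul_of_nonneg_right h1 px.le]
  calc _ ≤ 2 * dist x y * (1 + dist x o) * (1 + dist y o) := by
        gcongr
        linarith
    _ = _ := by ring

theorem auxQ_continuous (E : Finset M) : Continuous (auxQ o E) := by
  unfold auxQ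
  refine (continuous_infDist_pt _).div (by fun_prop) fun x => ?_
  positivity

theorem auxH_abs (t : ℝ) (E : Finset M) (y : M) : |auxH o t E y| ≤ 1 := by
  unfold auxH
  rw [abs_of_nonneg (by positivity)]
  exact min_le_left _ _

theorem auxH_lip {t : ℝ} (ht : 0 < t) (E : Finset M) (x y : M) :
    |auxH o t E x - auxH o t E y| * dist y o ≤ 2 / t * dist x y := by
  have h1 : |auxH o t E x - auxH o t E y| ≤ |auxQ o E x - auxQ o E y| / t := by
    unfold auxH
    refine (abs_min_sub_min_le_max _ _ _ _).trans ?_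
    rw [sub_self, abs_zero]
    refine max_le (by positivity) ?_
    refine (abs_max_sub_max_le_max _ _ _ _).trans ?_
    rw [sub_self, abs_zero]
    refine max_le (by positivity) (le_of_eq ?_)
    rw [abs_sub_comm]
    rw [show 2 - auxQ o E y / t - (2 - auxQ o E x / t) = (auxQ o E x - auxQ o E y) / t by ring]
    rw [abs_div, abs_of_pos ht]
  calc _ ≤ |auxQ o E x - auxQ o E y| / t * dist y o := by gcongr
    _ = (|auxQ o E x - auxQ o E y| * dist y o) / t := by ring
    _ ≤ (2 * dist x y) / t := div_le_div_of_nonneg_right (auxQ_lip E x y) ht.le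
    _ = _ := by ring

theorem auxH_one {t : ℝ} (ht : 0 < t) {E : Finset M} {y : M} (h : auxQ o E y ≤ t) :
    auxH o t E y = 1 := by
  unfold auxH
  have : auxQ o E y / t ≤ 1 := by rwa [div_le_one ht]
  rw [min_eq_left]
  exact le_max_of_le_right (by linarith)

theorem auxH_zero {t : ℝ} (ht : 0 < t) {E : Finset M} {y : M} (h : 2 * t ≤ auxQ o E y) :
    auxH o t E y = 0 := by
  unfold auxH
  have : 2 ≤ auxQ o E y / t := by rwa [le_div_iff₀ ht]
  rw [max_eq_left (by linarith)]
  simp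

variable {F : Type*} [NormedAddCommGroup F] [NormedSpace ℝ F] {δ : M → F}

theorem aux_norm_δ (hδ : IsLipschitzFree o δ) (x : M) : ‖δ x‖ = dist x o := by
  rw [← hδ.isometry.dist_eq, hδ.map_base, dist_zero_right]

theorem aux_ext (hδ : IsLipschitzFree o δ) {Y : Type*} [NormedAddCommGroup Y] [NormedSpace ℝ Y]
    {S T : F →L[ℝ] Y} (h : ∀ x, S (δ x) = T (δ x)) : S = T := by
  apply ContinuousLinearMap.ext_on hδ.dense_span
  rintro _ ⟨x, rfl⟩
  exact h x

theorem aux_norm_le (hδ : IsLipschitzFree o δ) {L : ℝ} (hL : 0 ≤ L) (g : F →L[ℝ] ℝ)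
    (h : ∀ x y, |g (δ x) - g (δ y)| ≤ L * dist x y) : ‖g‖ ≤ L := by
  obtain ⟨φ, h1, h2⟩ := hδ.lift ⟨L, hL⟩ (fun x => g (δ x))
    (LipschitzWith.of_dist_le_mul fun x y => by rw [Real.dist_eq]; exact h x y)
    (by simp [hδ.map_base])
  have : g = φ := aux_ext hδ fun x => (h2 x).symm
  rw [this]
  exact h1

theorem aux_mult [CompleteSpace F] (hδ : IsLipschitzFree o δ) {C : ℝ} (hC : 0 ≤ C) (h : M → ℝ)
    (h1 : ∀ x, |h x| ≤ 1) (h2 : ∀ x y, |h x - h y| * dist y o ≤ C * dist x y) :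
    ∃ W : F →L[ℝ] F, ‖W‖ ≤ 1 + C ∧ ∀ x, W (δ x) = h x • δ x := by
  set e : (M →₀ ℝ) →ₗ[ℝ] F := Finsupp.linearCombination ℝ δ with he
  set f : (M →₀ ℝ) →ₗ[ℝ] F := Finsupp.linearCombination ℝ (fun x => h x • δ x) with hf
  have hdense : DenseRange e := by
    have := hδ.dense_span
    rw [← Finsupp.range_linearCombination] at this
    exact this
  have hC1 : 0 ≤ 1 + C := by linarith
  have hlip : ∀ x y, ‖h x • δ x - h y • δ y‖ ≤ (1 + C) * dist x y := by
    intro x y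
    have : h x • δ x - h y • δ y = h x • (δ x - δ y) + (h x - h y) • δ y := by
      rw [smul_sub, sub_smul]; abel
    rw [this]
    refine (norm_add_le _ _).trans ?_
    rw [norm_smul, norm_smul, aux_norm_δ hδ, ← dist_eq_norm (δ x), hδ.isometry.dist_eq,
      Real.norm_eq_abs, Real.norm_eq_abs]
    nlinarith [h1 x, h2 x y, dist_nonneg (x := x) (y := y)]
  have hnorm : ∀ c, ‖f c‖ ≤ (1 + C) * ‖e c‖ := by
    intro c
    apply aux_norm_le_of_forall (by positivity)
    intro φ hφ
    obtain ⟨ψ, hψ1, hψ2⟩ := hδ.lift ⟨1 + C, hC1⟩ (fun x => φ (h x • δ x))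
      (LipschitzWith.of_dist_le_mul fun x y => by
        rw [Real.dist_eq, ← map_sub]
        calc _ = ‖φ (h x • δ x - h y • δ y)‖ := rfl
          _ ≤ 1 * ‖h x • δ x - h y • δ y‖ := φ.le_of_opNorm_le hφ _
          _ ≤ _ := by rw [one_mul]; exact hlip x y)
      (by simp [hδ.map_base])
    have : φ (f c) = ψ (e c) := by
      simp only [he, hf, Finsupp.linearCombination_apply, Finsupp.sum, map_sum]
      refine Finset.sum_congr rfl fun x _ => ?_
      rw [map_smul φ (c x), map_smul ψ (c x), hψ2]
    rw [this]
    refine (le_abs_self _).trans ?_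
    exact ψ.le_of_opNorm_le hψ1 _
  refine ⟨f.extendOfNorm e, LinearMap.opNorm_extendOfNorm_le hdense hC1 hnorm, fun x => ?_⟩
  have := LinearMap.extendOfNorm_eq hdense ⟨_, hnorm⟩ (Finsupp.single x 1)
  simpa [he, hf] using this

theorem aux_W [CompleteSpace F] (hδ : IsLipschitzFree o δ) {t : ℝ} (ht : 0 < t) (E : Finset M) :
    ∃ W : F →L[ℝ] F, ‖W‖ ≤ 1 + 2 / t ∧ ∀ x, W (δ x) = auxH o t E x • δ x :=
  aux_mult hδ (by positivity) _ (auxH_abs t E) (auxH_lip ht E)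

theorem aux_disjoint_wuc (hδ : IsLipschitzFree o δ) {L : ℝ} (g : ℕ → (F →L[ℝ] ℝ))
    (hg : ∀ n, ‖g n‖ ≤ L) (hdisj : ∀ m n, m < n → ∀ x, g m (δ x) = 0 ∨ g n (δ x) = 0) :
    IsWUC g := by
  have hL : 0 ≤ L := (norm_nonneg _).trans (hg 0)
  have hone : ∀ x, ∃ i, ∀ n, n ≠ i → g n (δ x) = 0 := by
    intro x
    by_cases hx : ∃ i, g i (δ x) ≠ 0
    · obtain ⟨i, hi⟩ := hx
      refine ⟨i, fun n hn => ?_⟩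
      rcases lt_or_gt_of_ne hn with h | h
      · exact (hdisj n i h x).resolve_right hi
      · exact (hdisj i n h x).resolve_left hi
    · push Not at hx
      exact ⟨0, fun n _ => hx n⟩
  have hbound : ∀ (s : Finset ℕ) (σ : ℕ → ℝ), (∀ n, |σ n| ≤ 1) →
      ‖∑ n ∈ s, σ n • g n‖ ≤ 2 * L := by
    intro s σ hσ
    apply aux_norm_le hδ (by positivity)
    intro x y
    obtain ⟨i, hi⟩ := hone x
    obtain ⟨j, hj⟩ := hone y
    have hterm : ∀ n, |σ n * (g n (δ x) - g n (δ y))| ≤ L * dist x y := by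
      intro n
      rw [abs_mul, ← map_sub]
      have : |g n (δ x - δ y)| ≤ L * dist x y := by
        rw [← hδ.isometry.dist_eq, dist_eq_norm]
        exact (g n).le_of_opNorm_le (hg n) _
      calc _ ≤ 1 * |g n (δ x - δ y)| := by gcongr; exact hσ n
        _ ≤ _ := by rw [one_mul]; exact this
    have e : (∑ n ∈ s, σ n • g n) (δ x) - (∑ n ∈ s, σ n • g n) (δ y)
        = ∑ n ∈ s, σ n * (g n (δ x) - g n (δ y)) := by
      simp [← Finset.sum_sub_distrib, mul_sub]
    rw [e]
    classical
    calc |∑ n ∈ s, σ n * (g n (δ x) - g n (δ y))|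
        ≤ ∑ n ∈ s, |σ n * (g n (δ x) - g n (δ y))| := Finset.abs_sum_le_sum_abs _ _
      _ ≤ ∑ n ∈ s ∪ {i, j}, |σ n * (g n (δ x) - g n (δ y))| :=
          Finset.sum_le_sum_of_subset_of_nonneg Finset.subset_union_left
            fun _ _ _ => abs_nonneg _
      _ = ∑ n ∈ ({i, j} : Finset ℕ), |σ n * (g n (δ x) - g n (δ y))| := by
          symm
          apply Finset.sum_subset Finset.subset_union_right
          intro n _ hn
          simp only [Finset.mem_insert, Finset.mem_singleton, not_or] at hn
          rw [hi n hn.1, hj n hn.2]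
          simp
      _ ≤ ({i, j} : Finset ℕ).card • (L * dist x y) :=
          Finset.sum_le_card_nsmul _ _ _ fun n _ => hterm n
      _ ≤ 2 * L * dist x y := by
          rw [nsmul_eq_mul, mul_assoc]
          gcongr
          exact_mod_cast Finset.card_le_two
  intro φ
  refine summable_of_sum_le (c := ‖φ‖ * (2 * L)) (fun _ => abs_nonneg _) fun s => ?_
  have e : ∑ n ∈ s, |φ (g n)| = φ (∑ n ∈ s, (SignType.sign (φ (g n)) : ℝ) • g n) := by
    rw [map_sum]
    refine Finset.sum_congr rfl fun n _ => ?_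
    rw [map_smul, smul_eq_mul, sign_mul_self]
  rw [e]
  refine (le_abs_self _).trans ((φ.le_opNorm _).trans ?_)
  gcongr
  apply hbound
  intro n
  rcases lt_trichotomy (φ (g n)) 0 with h | h | h <;> simp [h]

theorem aux_approx (hδ : IsLipschitzFree o δ) (v : F) {η : ℝ} (hη : 0 < η) :
    ∃ c : M →₀ ℝ, ‖v - Finsupp.linearCombination ℝ δ c‖ < η := by
  have hdense := hδ.dense_span
  rw [← Finsupp.range_linearCombination] at hdense
  obtain ⟨_, ⟨c, rfl⟩, hc⟩ := hdense.exists_dist_lt v hη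
  exact ⟨c, by rwa [dist_eq_norm] at hc⟩

theorem aux_key_step [CompleteSpace F] (hδ : IsLipschitzFree o δ) {t ε : ℝ} (hε : 0 < ε)
    (ht : 0 < t) (E : Finset M) (W : F →L[ℝ] F) (hWn : ‖W‖ ≤ 1 + 2 / t)
    (hW : ∀ x, W (δ x) = auxH o t E x • δ x) (μ : F) (hμ : ε < ‖μ - W μ‖) :
    ∃ E' : Finset M, E ⊆ E' ∧ ∃ g : F →L[ℝ] ℝ, ‖g‖ ≤ (2 + 2 / t) * (1 + 4 / t) ∧
      (∀ x, auxQ o E x ≤ t → g (δ x) = 0) ∧ (∀ x, t ≤ auxQ o E' x → g (δ x) = 0) ∧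
      ε / 2 < g μ := by
  classical
  obtain ⟨f, hf1, hf2⟩ := exists_dual_vector ℝ (μ - W μ) (by linarith)
  obtain ⟨c, hc⟩ := aux_approx hδ μ (η := ε / 2 / ((2 + 2 / t) * (2 + 4 / t))) (by positivity)
  set ν := Finsupp.linearCombination ℝ δ c with hν
  have ht2 : 0 < t / 2 := by positivity
  obtain ⟨W', hWn', hW'⟩ := aux_W hδ ht2 (E ∪ c.support)
  have hWn'' : ‖W'‖ ≤ 1 + 4 / t := by
    refine hWn'.trans (le_of_eq ?_)
    field_simp
    ring
  have hfix : W' ν = ν := by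
    rw [hν, Finsupp.linearCombination_apply, Finsupp.sum, map_sum]
    refine Finset.sum_congr rfl fun x hx => ?_
    rw [map_smul, hW', auxH_one ht2, one_smul]
    rw [auxQ_mem (Finset.mem_union_right _ hx)]
    exact ht2.le
  set V : F →L[ℝ] F := ContinuousLinearMap.id ℝ F - W with hV
  have hVn : ‖V‖ ≤ 2 + 2 / t := by
    refine (norm_sub_le _ _).trans ?_
    linarith [ContinuousLinearMap.norm_id_le (𝕜 := ℝ) (E := F)]
  have hfV : ‖f.comp V‖ ≤ 2 + 2 / t := by
    refine (ContinuousLinearMap.opNorm_comp_le _ _).trans ?_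
    rw [hf1, one_mul]
    exact hVn
  have hg : ∀ x, ((f.comp V).comp W') (δ x) =
      auxH o (t / 2) (E ∪ c.support) x * ((1 - auxH o t E x) * f (δ x)) := by
    intro x
    simp [hW', hV, hW, sub_mul, mul_sub]
  refine ⟨E ∪ c.support, Finset.subset_union_left, (f.comp V).comp W', ?_, ?_, ?_, ?_⟩
  · refine (ContinuousLinearMap.opNorm_comp_le _ _).trans ?_
    gcongr
  · intro x hx
    rw [hg, auxH_one ht hx]
    simp
  · intro x hx
    rw [hg, auxH_zero ht2 (by linarith)]
    simp
  · have e1 : (f.comp V) μ = ‖μ - W μ‖ := by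
      simpa [hV] using hf2
    have e2 : ((f.comp V).comp W') μ = (f.comp V) μ - (f.comp V) ((μ - ν) - W' (μ - ν)) := by
      rw [← map_sub (f.comp V)]
      simp only [map_sub W', hfix, ContinuousLinearMap.comp_apply]
      congr 2
      abel
    have e3 : ‖(μ - ν) - W' (μ - ν)‖ ≤ (2 + 4 / t) * ‖μ - ν‖ := by
      refine (norm_sub_le _ _).trans ?_
      have := W'.le_of_opNorm_le hWn'' (μ - ν)
      linarith
    have e4 : (f.comp V) ((μ - ν) - W' (μ - ν)) ≤ ε / 2 := by
      refine (le_abs_self _).trans ?_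
      calc _ ≤ (2 + 2 / t) * ‖(μ - ν) - W' (μ - ν)‖ := (f.comp V).le_of_opNorm_le hfV _
        _ ≤ (2 + 2 / t) * ((2 + 4 / t) * ‖μ - ν‖) := by gcongr
        _ ≤ (2 + 2 / t) * ((2 + 4 / t) * (ε / 2 / ((2 + 2 / t) * (2 + 4 / t)))) := by gcongr
        _ = ε / 2 := by field_simp
    rw [e2, e1]
    linarith

/-- Key lemma: a (V*)-set is almost fixed by a multiplication operator supported near a
finite set. -/
theorem aux_key [CompleteSpace F] (hδ : IsLipschitzFree o δ) {Γ : Set F} (hΓ : IsVStarSet Γ)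
    {t ε : ℝ} (hε : 0 < ε) (ht : 0 < t) :
    ∃ (E : Finset M) (T : F →L[ℝ] F), (∀ x, T (δ x) = auxH o t E x • δ x) ∧
      ∀ μ ∈ Γ, ‖μ - T μ‖ ≤ ε := by
  by_contra hcon
  push Not at hcon
  have step : ∀ E : Finset M, ∃ E' : Finset M, E ⊆ E' ∧ ∃ g : F →L[ℝ] ℝ,
      ‖g‖ ≤ (2 + 2 / t) * (1 + 4 / t) ∧
      (∀ x, auxQ o E x ≤ t → g (δ x) = 0) ∧ (∀ x, t ≤ auxQ o E' x → g (δ x) = 0) ∧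
      ∃ μ ∈ Γ, ε / 2 < g μ := by
    intro E
    obtain ⟨W, hWn, hW⟩ := aux_W hδ ht E
    obtain ⟨μ, hμ, h⟩ := hcon E W hW
    obtain ⟨E', h1, g, h2, h3, h4, h5⟩ := aux_key_step hδ hε ht E W hWn hW μ h
    exact ⟨E', h1, g, h2, h3, h4, μ, hμ, h5⟩
  choose nxt hsub g hgn hg0 hg1 μ hμ hgμ using step
  let E : ℕ → Finset M := fun n => nxt^[n] ∅
  have hE : ∀ n, E (n + 1) = nxt (E n) := fun n => Function.iterate_succ_apply' _ _ _
  have hmono : Monotone E := monotone_nat_of_le_succ fun n => by rw [hE]; exact hsub _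
  have hw : IsWUC (fun n => g (E n)) := by
    refine aux_disjoint_wuc hδ _ (fun n => hgn _) fun m n hmn x => ?_
    rcases le_total t (auxQ o (E (m + 1)) x) with h | h
    · left
      apply hg1
      rwa [← hE]
    · right
      apply hg0
      exact (auxQ_anti (hmono hmn) x).trans h
  obtain ⟨n, hn⟩ := (hΓ _ hw (ε / 2) (by positivity)).exists
  have := hn _ (hμ (E n))
  linarith [hgμ (E n), le_abs_self (g (E n) (μ (E n)))]

theorem aux_map_freeSpan {Y : Type*} [NormedAddCommGroup Y] [NormedSpace ℝ Y] (T : F →L[ℝ] Y)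
    {S : Set M} {p : Submodule ℝ Y} (hp : IsClosed (p : Set Y)) (h : ∀ x ∈ S, T (δ x) ∈ p)
    {v : F} (hv : v ∈ freeSpan δ S) : T v ∈ p := by
  have : freeSpan δ S ≤ p.comap (T : F →ₗ[ℝ] Y) := by
    apply Submodule.topologicalClosure_minimal
    · rw [Submodule.span_le]
      rintro _ ⟨x, hx, rfl⟩
      exact h x hx
    · exact hp.preimage T.continuous
  exact this hv

theorem aux_freeSpan_closed (S : Set M) : IsClosed (freeSpan δ S : Set F) :=
  Submodule.isClosed_topologicalClosure _

theorem aux_freeSpan_mono {S S' : Set M} (h : S ⊆ S') {v : F} (hv : v ∈ freeSpan δ S) :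
    v ∈ freeSpan δ S' :=
  aux_map_freeSpan (ContinuousLinearMap.id ℝ F) (aux_freeSpan_closed S')
    (fun _ hx => mem_freeSpan δ (h hx)) hv

theorem aux_eq_on_freeSpan {φ ψ : F →L[ℝ] ℝ} {S : Set M} (h : ∀ x ∈ S, φ (δ x) = ψ (δ x))
    {v : F} (hv : v ∈ freeSpan δ S) : φ v = ψ v := by
  have := aux_map_freeSpan (φ - ψ) (p := ⊥) (by simp) (fun x hx => by simp [h x hx]) hv
  simpa [sub_eq_zero] using this

/-- The partial intersections. -/
def auxK (o : M) (E : ℕ → Finset M) (t : ℕ → ℝ) (n : ℕ) : Set M :=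
  {x | ∀ i < n, auxQ o (E i) x ≤ 2 * t i}

/-- The full intersection. -/
def auxKinf (o : M) (E : ℕ → Finset M) (t : ℕ → ℝ) : Set M :=
  {x | ∀ i, auxQ o (E i) x ≤ 2 * t i}

theorem aux_near {E : Finset M} {x : M} {c : ℝ} (h : auxQ o E x < c) :
    ∃ e ∈ insert o (E : Set M), dist x e < c * (1 + dist x o) := by
  unfold auxQ at h
  rw [div_lt_iff₀ (by positivity)] at h
  exact (infDist_lt_iff ⟨o, by simp⟩).1 h

theorem aux_tb {E : ℕ → Finset M} {t : ℕ → ℝ} (ht : Tendsto t atTop (𝓝 0)) (h0 : t 0 ≤ 1 / 8)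
    {r : ℝ} (hr : 0 < r) :
    ∃ n, ∃ s : Set M, s.Finite ∧ ∀ x ∈ auxK o E t n, ∃ e ∈ s, dist x e < r := by
  have hfin : ∀ n, (insert o (E n : Set M)).Finite := fun n => (E n).finite_toSet.insert o
  obtain ⟨R, hR⟩ := (hfin 0).isBounded.subset_closedBall o
  have hR0 : 0 ≤ R := by
    have := hR (Set.mem_insert o _)
    simpa using this
  have hb : ∀ x, auxQ o (E 0) x ≤ 2 * t 0 → 1 + dist x o ≤ 2 + 2 * R := by
    intro x hx
    obtain ⟨e, he, hxe⟩ := aux_near (c := 1 / 3) (lt_of_le_of_lt hx (by linarith))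
    have h1 : dist e o ≤ R := hR he
    have := dist_triangle x e o
    linarith
  have hlim : Tendsto (fun n => 2 * t n) atTop (𝓝 0) := by simpa using ht.const_mul 2
  obtain ⟨n, hn⟩ := (hlim.eventually_lt_const
    (show (0 : ℝ) < r / (2 + 2 * R) by positivity)).exists
  refine ⟨n + 1, _, hfin n, fun x hx => ?_⟩
  obtain ⟨e, he, hxe⟩ := aux_near (lt_of_le_of_lt (hx n (by omega)) hn)
  refine ⟨e, he, hxe.trans_le ?_⟩
  calc _ ≤ r / (2 + 2 * R) * (2 + 2 * R) :=
        mul_le_mul_of_nonneg_left (hb x (hx 0 (by omega))) (by positivity)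
    _ = r := by field_simp

theorem aux_Kinf_sub (E : ℕ → Finset M) (t : ℕ → ℝ) (n : ℕ) :
    auxKinf o E t ⊆ auxK o E t n := fun _ hx i _ => hx i

theorem aux_Kinf_compact [CompleteSpace M] {E : ℕ → Finset M} {t : ℕ → ℝ}
    (ht : Tendsto t atTop (𝓝 0)) (h0 : t 0 ≤ 1 / 8) : IsCompact (auxKinf o E t) := by
  have hcl : IsClosed (auxKinf o E t) := by
    have : auxKinf o E t = ⋂ i, {x | auxQ o (E i) x ≤ 2 * t i} := by
      ext x; simp [auxKinf]
    rw [this]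
    exact isClosed_iInter fun i => isClosed_le (auxQ_continuous _) continuous_const
  refine TotallyBounded.isCompact_of_isClosed ?_ hcl
  rw [Metric.totallyBounded_iff]
  intro r hr
  obtain ⟨n, s, hs, h⟩ := aux_tb (o := o) (E := E) ht h0 hr
  refine ⟨s, hs, fun x hx => ?_⟩
  obtain ⟨e, he, hxe⟩ := h x (aux_Kinf_sub E t n hx)
  simp only [mem_iUnion, mem_ball]
  exact ⟨e, he, hxe⟩

theorem aux_unif [CompleteSpace M] {E : ℕ → Finset M} {t : ℕ → ℝ}
    (ht : Tendsto t atTop (𝓝 0)) (h0 : t 0 ≤ 1 / 8) {f : M → ℝ} (hf : Continuous f)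
    (hf0 : ∀ x ∈ auxKinf o E t, f x = 0) {η : ℝ} (hη : 0 < η) :
    ∃ n, ∀ x ∈ auxK o E t n, |f x| ≤ η := by
  by_contra hcon
  push Not at hcon
  choose x hx hfx using hcon
  have htb : TotallyBounded (range x) := by
    rw [Metric.totallyBounded_iff]
    intro r hr
    obtain ⟨n, s, hs, h⟩ := aux_tb (o := o) (E := E) ht h0 hr
    refine ⟨s ∪ x '' (Set.Iio n), hs.union ((Set.finite_Iio n).image x), ?_⟩
    rintro _ ⟨k, rfl⟩
    simp only [mem_iUnion, mem_ball]
    rcases lt_or_ge k n with hk | hk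
    · exact ⟨x k, Or.inr ⟨k, hk, rfl⟩, by simpa using hr⟩
    · obtain ⟨e, he, hxe⟩ := h (x k) (fun i hi => hx k i (by omega))
      exact ⟨e, Or.inl he, hxe⟩
  have hcomp : IsCompact (closure (range x)) :=
    TotallyBounded.isCompact_of_isClosed htb.closure isClosed_closure
  obtain ⟨a, -, φ, hφ, hlim⟩ := hcomp.tendsto_subseq fun n => subset_closure ⟨n, rfl⟩
  have haK : a ∈ auxKinf o E t := by
    intro i
    refine le_of_tendsto (((auxQ_continuous (E i)).tendsto a).comp hlim) ?_
    filter_upwards [eventually_gt_atTop i] with k hk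
    exact hx (φ k) i (hk.trans_le (hφ.id_le k))
  have : η ≤ |f a| := by
    refine ge_of_tendsto ((hf.abs.tendsto a).comp hlim) ?_
    exact Eventually.of_forall fun k => (hfx (φ k)).le
  rw [hf0 a haK, abs_zero] at this
  linarith

theorem aux_inter [CompleteSpace M] (hδ : IsLipschitzFree o δ) {E : ℕ → Finset M} {t : ℕ → ℝ}
    (ht : Tendsto t atTop (𝓝 0)) (h0 : t 0 ≤ 1 / 8) {v : F}
    (hv : ∀ n, v ∈ freeSpan δ (auxK o E t n)) : v ∈ freeSpan δ (auxKinf o E t) := by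
  by_contra hcon
  obtain ⟨φ, u, hφ1, hφ2⟩ := geometric_hahn_banach_closed_point
    (freeSpan δ (auxKinf o E t)).convex (aux_freeSpan_closed _) hcon
  have hu : 0 < u := by simpa using hφ1 0 (Submodule.zero_mem _)
  have hzero : ∀ x ∈ auxKinf o E t, φ (δ x) = 0 := by
    intro x hx
    by_contra hne
    have := hφ1 ((u / φ (δ x)) • δ x) (Submodule.smul_mem _ _ (mem_freeSpan δ hx))
    rw [map_smul, smul_eq_mul, div_mul_cancel₀ _ hne] at this
    exact lt_irrefl _ this
  have hlip : LipschitzWith ‖φ‖₊ (fun x => φ (δ x)) := by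
    have := φ.lipschitz.comp hδ.isometry.lipschitz
    rw [mul_one] at this
    exact this
  suffices h : |φ v| ≤ u by linarith [le_abs_self (φ v)]
  obtain ⟨c, hc⟩ := aux_approx hδ v (η := u / 2 / (‖φ‖ + 1)) (by positivity)
  set C := ∑ x ∈ c.support, |c x| with hC
  have hC0 : 0 ≤ C := Finset.sum_nonneg fun _ _ => abs_nonneg _
  set η := u / 2 / (C + 1) with hη
  have hηpos : 0 < η := by positivity
  obtain ⟨n, hn⟩ := aux_unif ht h0 hlip.continuous hzero hηpos
  obtain ⟨ψ, hψ1, hψ2⟩ := hδ.lift ‖φ‖₊ (fun x => max (-η) (min η (φ (δ x))))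
    ((hlip.const_min η).const_max (-η)) (by
      simp [hδ.map_base, hηpos.le])
  have e1 : φ v = ψ v := by
    refine aux_eq_on_freeSpan (fun x hx => ?_) (hv n)
    have := abs_le.1 (hn x hx)
    rw [hψ2, min_eq_right this.2, max_eq_right this.1]
  have hψb : ∀ x, |ψ (δ x)| ≤ η := by
    intro x
    rw [hψ2, abs_le]
    exact ⟨le_max_left _ _, max_le (by linarith) (min_le_left _ _)⟩
  have e2 : |ψ (Finsupp.linearCombination ℝ δ c)| ≤ u / 2 := by
    rw [Finsupp.linearCombination_apply, Finsupp.sum, map_sum]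
    calc _ ≤ ∑ x ∈ c.support, |ψ (c x • δ x)| := Finset.abs_sum_le_sum_abs _ _
      _ ≤ ∑ x ∈ c.support, |c x| * η := by
          refine Finset.sum_le_sum fun x _ => ?_
          rw [map_smul, smul_eq_mul, abs_mul]
          gcongr
          exact hψb x
      _ = C * η := by rw [Finset.sum_mul]
      _ ≤ (C + 1) * η := by gcongr; linarith
      _ = u / 2 := by rw [hη]; field_simp
  have e3 : |ψ (v - Finsupp.linearCombination ℝ δ c)| ≤ u / 2 := by
    calc _ ≤ ‖φ‖ * ‖v - Finsupp.linearCombination ℝ δ c‖ := ψ.le_of_opNorm_le hψ1 _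
      _ ≤ (‖φ‖ + 1) * (u / 2 / (‖φ‖ + 1)) := by gcongr; linarith
      _ = u / 2 := by field_simp
  rw [e1]
  calc |ψ v| = |ψ (v - Finsupp.linearCombination ℝ δ c) + ψ (Finsupp.linearCombination ℝ δ c)| := by
        rw [← map_add]; simp
    _ ≤ _ := abs_add_le _ _
    _ ≤ u := by linarith

/-- Compact reduction for (V*)-sets. -/
theorem aux_reduction [CompleteSpace M] [CompleteSpace F] (hδ : IsLipschitzFree o δ)
    {Γ : Set F} (hΓ : IsVStarSet Γ) {ε : ℝ} (hε : 0 < ε) :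
    ∃ K : Set M, IsCompact K ∧ o ∈ K ∧ ∃ A : Set F, IsVStarSet A ∧
      (∀ a ∈ A, a ∈ freeSpan δ K) ∧ ∀ x ∈ Γ, ∃ a ∈ A, ‖x - a‖ ≤ ε := by
  set t : ℕ → ℝ := fun n => 1 / 8 * (1 / 2) ^ n with ht_def
  have htpos : ∀ n, 0 < t n := fun n => by simp only [ht_def]; positivity
  have ht : Tendsto t atTop (𝓝 0) := by
    have := (tendsto_pow_atTop_nhds_zero_of_lt_one (r := (1 / 2 : ℝ)) (by norm_num)
      (by norm_num)).const_mul (1 / 8)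
    simpa [ht_def] using this
  have ht0 : t 0 ≤ 1 / 8 := by simp [ht_def]
  have hstep : ∀ (n : ℕ) (P : F →L[ℝ] F), ∃ (E : Finset M) (T : F →L[ℝ] F),
      (∀ x, T (δ x) = auxH o (t n) E x • δ x) ∧ ∀ μ ∈ Γ, ‖P μ - T (P μ)‖ ≤ ε / 2 / 2 ^ n := by
    intro n P
    obtain ⟨E, T, h1, h2⟩ := aux_key hδ (aux_vstar_image hΓ P) (t := t n) (ε := ε / 2 / 2 ^ n)
      (by positivity) (htpos n)
    exact ⟨E, T, h1, fun μ hμ => h2 _ ⟨μ, hμ, rfl⟩⟩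
  choose E' T hT hTΓ using hstep
  let P : ℕ → (F →L[ℝ] F) := fun n =>
    Nat.rec (ContinuousLinearMap.id ℝ F) (fun n P => (T n P).comp P) n
  have hP0 : P 0 = ContinuousLinearMap.id ℝ F := rfl
  have hPs : ∀ n, P (n + 1) = (T n (P n)).comp (P n) := fun n => rfl
  let E : ℕ → Finset M := fun n => E' n (P n)
  have hPK : ∀ n v, P n v ∈ freeSpan δ (auxK o E t n) := by
    intro n
    induction n with
    | zero =>
      intro v
      have h1 : auxK o E t 0 = univ := by ext x; simp [auxK]
      rw [h1, freeSpan, image_univ]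
      exact hδ.dense_span v
    | succ n ih =>
      intro v
      rw [hPs]
      refine aux_map_freeSpan (T n (P n)) (aux_freeSpan_closed _) (fun x hx => ?_) (ih v)
      rw [hT]
      rcases le_total (2 * t n) (auxQ o (E n) x) with h | h
      · rw [auxH_zero (htpos n) h, zero_smul]
        exact Submodule.zero_mem _
      · refine Submodule.smul_mem _ _ (mem_freeSpan δ fun i hi => ?_)
        rcases Nat.lt_succ_iff_lt_or_eq.1 hi with h' | rfl
        · exact hx i h'
        · exact h
  have hPK' : ∀ m n v, m ≤ n → P n v ∈ freeSpan δ (auxK o E t m) := fun m n v hmn =>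
    aux_freeSpan_mono (S := auxK o E t n) (S' := auxK o E t m)
      (fun x hx i hi => hx i (hi.trans_le hmn)) (hPK n v)
  have hdist : ∀ μ ∈ Γ, ∀ n, dist (P n μ) (P (n + 1) μ) ≤ ε / 2 / 2 ^ n := by
    intro μ hμ n
    rw [dist_eq_norm, hPs]
    exact hTΓ n (P n) μ hμ
  have hlim : ∀ μ, ∃ a, μ ∈ Γ → Tendsto (fun n => P n μ) atTop (𝓝 a) := by
    intro μ
    by_cases hμ : μ ∈ Γ
    · obtain ⟨a, ha⟩ := cauchySeq_tendsto_of_complete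
        (cauchySeq_of_le_geometric_two (hdist μ hμ))
      exact ⟨a, fun _ => ha⟩
    · exact ⟨0, fun h => absurd h hμ⟩
  choose a ha using hlim
  have hclose : ∀ μ ∈ Γ, ∀ n, dist (P n μ) (a μ) ≤ ε / 2 ^ n := fun μ hμ n =>
    dist_le_of_le_geometric_two_of_tendsto (hdist μ hμ) (ha μ hμ) n
  refine ⟨auxKinf o E t, aux_Kinf_compact ht ht0, ?_, a '' Γ, ?_, ?_, ?_⟩
  · intro i
    rw [auxQ_base]
    linarith [htpos i]
  · apply aux_vstar_approx
    intro η hη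
    have hl : Tendsto (fun n : ℕ => ε / 2 ^ n) atTop (𝓝 0) :=
      tendsto_const_nhds.div_atTop (tendsto_pow_atTop_atTop_of_one_lt (by norm_num))
    obtain ⟨n, hn⟩ := (hl.eventually_lt_const hη).exists
    refine ⟨P n '' Γ, aux_vstar_image hΓ _, ?_⟩
    rintro _ ⟨μ, hμ, rfl⟩
    refine ⟨P n μ, ⟨μ, hμ, rfl⟩, ?_⟩
    rw [← dist_eq_norm, dist_comm]
    exact (hclose μ hμ n).trans hn.le
  · rintro _ ⟨μ, hμ, rfl⟩
    refine aux_inter hδ ht ht0 fun m => ?_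
    refine (aux_freeSpan_closed (δ := δ) (auxK o E t m)).mem_of_tendsto (ha μ hμ) ?_
    filter_upwards [eventually_ge_atTop m] with n hn using hPK' m n μ hn
  · intro μ hμ
    refine ⟨a μ, ⟨μ, hμ, rfl⟩, ?_⟩
    have := hclose μ hμ 0
    rw [dist_eq_norm] at this
    simpa [hP0] using this

end Free

/-- Suppose that for every compact `K ⊆ M` containing the base point and every WUC
series `∑ fₙ` in `Lip₀(K)` there is a WUC series `∑ gₙ` in `Lip₀(M)` with `gₙ|_K = fₙ`.
(Here `Lip₀(K)` and `Lip₀(M)` are realized as the duals `F(K)*` and `F(M)*`, and a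
functional corresponds to the Lipschitz function `x ↦ ⟨φ, δ(x)⟩`.)  Then property (V*)
is compactly determined for `F(M)`: if `F(K ∪ {0})` has property (V*) for every compact
`K ⊆ M`, then `F(M)` has property (V*). -/
theorem propertyVStar_compactlyDetermined_of_wucExtension
    {M : Type*} [MetricSpace M] [CompleteSpace M] (o : M)
    {F : Type*} [NormedAddCommGroup F] [NormedSpace ℝ F] [CompleteSpace F]
    (δ : M → F) (hδ : IsLipschitzFree o δ)
    (hext : ∀ K : Set M, IsCompact K → o ∈ K →
      ∀ f : ℕ → (↥(freeSpan δ K) →L[ℝ] ℝ), IsWUC f →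
        ∃ g : ℕ → (F →L[ℝ] ℝ), IsWUC g ∧
          ∀ n : ℕ, ∀ x : M, ∀ hx : x ∈ K,
            g n (δ x) = f n ⟨δ x, mem_freeSpan δ hx⟩)
    (hcpt : ∀ K : Set M, IsCompact K → HasPropertyVStar ↥(freeSpan δ (K ∪ {o}))) :
    HasPropertyVStar F := by

  intro Γ hΓ
  apply aux_groth
  intro ε hε
  obtain ⟨K, hK, hoK, A, hA, hAK, hΓA⟩ := aux_reduction hδ hΓ hε
  refine ⟨A, ?_, hΓA⟩
  have hV : HasPropertyVStar ↥(freeSpan δ K) := by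
    have h := hcpt K hK
    have hKo : K ∪ {o} = K := by
      rw [Set.union_eq_left]
      simpa using hoK
    rwa [hKo] at h
  let A' : Set ↥(freeSpan δ K) := Subtype.val ⁻¹' A
  have hA' : IsVStarSet A' := by
    intro f hf η hη
    obtain ⟨g, hg, hgf⟩ := hext K hK hoK f hf
    filter_upwards [hA g hg η hη] with n hn x hx
    have hx' := hn x.1 hx
    obtain ⟨φ, hφ, -⟩ := exists_extension_norm_eq (freeSpan δ K) (f n)
    have : g n x.1 = φ x.1 := aux_eq_on_freeSpan
      (fun y hy => by rw [hgf n y hy, ← hφ]) x.2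
    rw [this, hφ] at hx'
    exact hx'
  have h1 := aux_relWeaklyCompact_image (freeSpan δ K).subtypeL (hV A' hA')
  have h2 : (freeSpan δ K).subtypeL '' A' = A := by
    ext x
    constructor
    · rintro ⟨y, hy, rfl⟩
      exact hy
    · intro hx
      exact ⟨⟨x, hAK x hx⟩, hx, rfl⟩
  rwa [h2] at h1
end
end
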